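/- arXiv:1810.01704 — 3 statements merged into one kernel-verified Lean document; each statement's English description precedes it below -/
import Mathlib

section
/- Let H be a Heyting algebra having the Density and Splitting properties, let A and B be finite Heyting algebras, let i : A → H and j : A → B be injective Heyting-algebra homomorphisms. Then there exists an injective Heyting-algebra homomorphism k : B → H with k ∘ j = i. -/
/-- `StrongOrd b a` means `b ≫ a`, i.e. `b ⇨ a = a` and `a ≤ b`. -/
def StrongOrd {H : Type*} [HeytingAlgebra H] (b a : H) : Prop := b ⇨ a = a ∧ a ≤ b

/-- The Density property. -/
def HasDensity (H : Type*) [HeytingAlgebra H] : Prop :=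
  ∀ a c : H, StrongOrd c a → a ≠ ⊤ → ∃ b : H, b ≠ ⊤ ∧ StrongOrd c b ∧ StrongOrd b a

/-- The Splitting property. -/
def HasSplitting (H : Type*) [HeytingAlgebra H] : Prop :=
  ∀ a b₁ b₂ : H, StrongOrd (b₁ ⊓ b₂) a → a ≠ ⊤ →
    ∃ a₁ a₂ : H, a₁ ≠ ⊤ ∧ a₂ ≠ ⊤ ∧ a₂ ⇨ a = a₁ ∧ a₁ ⇨ a = a₂ ∧
      a₁ ≤ b₁ ∧ a₂ ≤ b₂ ∧ a₁ ⊔ a₂ = b₁ ⊔ b₂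

open Classical in
/-- infimum of `f` over a predicate -/
noncomputable def pinf {H Q : Type*} [HeytingAlgebra H] [Fintype Q] (S : Q → Prop) (f : Q → H) : H :=
  (Finset.univ.filter S).inf f

set_option linter.unusedSectionVars false

section PInf
variable {H Q : Type*} [HeytingAlgebra H] [Fintype Q] {S : Q → Prop} {f : Q → H}

theorem le_pinf {t : H} : t ≤ pinf S f ↔ ∀ v, S v → t ≤ f v := by
  classical
  unfold pinf
  simp [Finset.le_inf_iff]

theorem pinf_le {v : Q} (h : S v) : pinf S f ≤ f v := le_pinf.1 le_rfl v h

theorem le_pinf_sup {s t : H} (h : ∀ v, S v → s ≤ f v ⊔ t) : s ≤ pinf S f ⊔ t := by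
  classical
  unfold pinf
  rw [Finset.inf_sup_distrib_right]
  simpa [Finset.le_inf_iff] using h

theorem finset_inf_himp_le {ι : Type*} (s : Finset ι) (f : ι → H) (t : H)
    (h : ∀ v ∈ s, f v ⇨ t ≤ t) : s.inf f ⇨ t ≤ t := by
  classical
  induction s using Finset.induction_on with
  | empty => simp
  | insert a s ha ih =>
    rw [Finset.inf_insert, ← himp_himp]
    have h1 := ih (fun v hv => h v (Finset.mem_insert_of_mem hv))
    have h2 := h a (Finset.mem_insert_self _ _)
    rw [himp_left_comm] at *
    exact (himp_le_himp_left h2).trans h1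

theorem pinf_himp_le {t : H} (h : ∀ v, S v → f v ⇨ t ≤ t) : pinf S f ⇨ t ≤ t := by
  classical
  unfold pinf
  apply finset_inf_himp_le
  simpa using h
end PInf

structure PreRel {Q : Type*} [PartialOrder Q] (R : Q → Q → Prop) : Prop where
  le : ∀ x y, x ≤ y → R x y
  trans : ∀ x y z, R x y → R y z → R x z
  bis : ∀ z x, R z x → ∃ w, w ≤ x ∧ R w z ∧ R z w

structure GoodFn {H Q : Type*} [HeytingAlgebra H] (R : Q → Q → Prop) (f : Q → H) : Prop where
  mono : ∀ x y, R x y → f x ≤ f y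
  sup : ∀ x y t, (∀ z, R x z → R y z → t ≤ f z) → t ≤ f x ⊔ f y
  bot : ∀ t, (∀ z, t ≤ f z) → t ≤ ⊥
  himp : ∀ x y, ¬ R y x → f y ⇨ f x ≤ f x
  ne_top : ∀ x, f x ≠ ⊤

structure Compat {H Q : Type*} [HeytingAlgebra H] (R : Q → Q → Prop) (f fNew : Q → H) : Prop where
  le : ∀ x z, R x z → f x ≤ fNew z
  ge : ∀ x t, (∀ z, R x z → t ≤ fNew z) → t ≤ f x

section Step
variable {H Q : Type*} [HeytingAlgebra H] [PartialOrder Q]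

def InC (R : Q → Q → Prop) (x c : Q) : Prop := R c x ∧ R x c

def eNew (R : Q → Q → Prop) (x : Q) (D : Q → Bool) (u v : Q) : Prop :=
  R u v ∧ R v u ∧ (InC R x u → D u = D v)

def relNew (R : Q → Q → Prop) (x : Q) (D : Q → Bool) (u v : Q) : Prop :=
  ∃ w, w ≤ v ∧ eNew R x D w u

open Classical in
noncomputable def fNew (R : Q → Q → Prop) (x : Q) (D : Q → Bool) (f : Q → H) (a : Bool → H) (u : Q) : H :=
  if InC R x u then a (D u) else f u

def Ind (R : Q → Q → Prop) (x : Q) (D : Q → Bool) (i : Bool) (v : Q) : Prop :=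
  ¬ InC R x v ∧ ∃ c, InC R x c ∧ D c = i ∧ c ≤ v

variable {R : Q → Q → Prop} {x : Q} {D : Q → Bool} {f : Q → H}

theorem PreRel.refl (hR : PreRel R) (u : Q) : R u u := hR.le _ _ le_rfl

theorem relNew_sub (hR : PreRel R) {u v : Q} (h : relNew R x D u v) : R u v := by
  obtain ⟨w, hw, h1, h2, -⟩ := h
  exact hR.trans _ _ _ h2 (hR.le _ _ hw)

theorem eNew_refl (hR : PreRel R) (u : Q) : eNew R x D u u :=
  ⟨hR.refl u, hR.refl u, fun _ => rfl⟩

theorem InC_of (hR : PreRel R) {u v : Q} (hu : InC R x u) (h1 : R u v) (h2 : R v u) : InC R x v :=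
  ⟨hR.trans _ _ _ h2 hu.1, hR.trans _ _ _ hu.2 h1⟩

theorem InC_rel (hR : PreRel R) {u v : Q} (hu : InC R x u) (hv : InC R x v) : R u v :=
  hR.trans _ _ _ hu.1 hv.2

theorem eNew_symm (hR : PreRel R) {u v : Q} (h : eNew R x D u v) : eNew R x D v u :=
  ⟨h.2.1, h.1, fun hv => (h.2.2 (InC_of hR hv h.2.1 h.1)).symm⟩

theorem eNew_trans (hR : PreRel R) {u v w : Q} (h : eNew R x D u v) (h' : eNew R x D v w) : eNew R x D u w :=
  ⟨hR.trans _ _ _ h.1 h'.1, hR.trans _ _ _ h'.2.1 h.2.1,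
    fun hu => (h.2.2 hu).trans (h'.2.2 (InC_of hR hu h.1 h.2.1))⟩

theorem relNew_of_not (hR : PreRel R) {u v : Q} (hu : ¬ InC R x u) (h : R u v) : relNew R x D u v := by
  obtain ⟨w, hw, h1, h2⟩ := hR.bis _ _ h
  exact ⟨w, hw, h1, h2, fun hc => absurd (InC_of hR hc h1 h2) hu⟩

theorem relNew_of_ind (hR : PreRel R) {u v : Q} (hu : InC R x u) (h : Ind R x D (D u) v) :
    relNew R x D u v := by
  obtain ⟨_, c, hc, hD, hcv⟩ := h
  exact ⟨c, hcv, InC_rel hR hc hu, InC_rel hR hu hc, fun _ => hD⟩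

theorem ind_of_relNew (hR : PreRel R) {u v : Q} (hu : InC R x u) (hv : ¬ InC R x v) (h : relNew R x D u v) :
    Ind R x D (D u) v := by
  obtain ⟨w, hw, h1, h2, h3⟩ := h
  have hwC := InC_of hR hu h2 h1
  exact ⟨hv, w, hwC, h3 hwC, hw⟩

theorem relNew_part (hR : PreRel R) {u v : Q} (hu : InC R x u) (hv : InC R x v) (h : D u = D v) :
    relNew R x D u v :=
  ⟨v, le_rfl, InC_rel hR hv hu, InC_rel hR hu hv, fun _ => h.symm⟩

theorem preRel_relNew (hR : PreRel R)
    (hab : ∀ v s, R x v → ¬ R v x → R v s → R s v → v = s)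
    (hT : ∀ w v s, InC R x w → InC R x v → InC R x s → w ≤ v → D s = D v →
      ∃ r, r ≤ s ∧ InC R x r ∧ D r = D w) : PreRel (relNew R x D) := by
  refine ⟨fun u v h => ⟨u, h, eNew_refl hR u⟩, ?_, ?_⟩
  · rintro u v t ⟨w, hw, hwu⟩ ⟨s, hs, hsv⟩
    suffices h : ∃ r, r ≤ s ∧ eNew R x D r w by
      obtain ⟨r, hr, hrw⟩ := h
      exact ⟨r, hr.trans hs, eNew_trans hR hrw hwu⟩
    by_cases hwC : InC R x w
    · by_cases hvC : InC R x v
      · have hsC := InC_of hR hvC hsv.2.1 hsv.1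
        obtain ⟨r, hr, hrC, hD⟩ := hT w v s hwC hvC hsC hw (hsv.2.2 hsC)
        exact ⟨r, hr, InC_rel hR hrC hwC, InC_rel hR hwC hrC, fun _ => hD⟩
      · have hxv : R x v := hR.trans _ _ _ hwC.2 (hR.le _ _ hw)
        have := hab v s hxv (fun h => hvC ⟨h, hxv⟩) hsv.2.1 hsv.1
        subst this
        exact ⟨w, hw, eNew_refl hR w⟩
    · have : R w s := hR.trans _ _ _ (hR.le _ _ hw) hsv.2.1
      exact relNew_of_not hR hwC this
  · rintro z y ⟨w, hw, hwz⟩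
    exact ⟨w, hw, ⟨z, le_rfl, eNew_symm hR hwz⟩, ⟨w, le_rfl, hwz⟩⟩

theorem fNew_in {a : Bool → H} {u : Q} (hu : InC R x u) : fNew R x D f a u = a (D u) := if_pos hu
theorem fNew_out {a : Bool → H} {u : Q} (hu : ¬ InC R x u) : fNew R x D f a u = f u := if_neg hu

theorem GoodFn.eqC (hf : GoodFn R f) {u : Q} (hu : InC R x u) : f u = f x :=
  le_antisymm (hf.mono _ _ hu.1) (hf.mono _ _ hu.2)

theorem compat_fNew (hR : PreRel R) (hf : GoodFn R f) {a : Bool → H}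
    (hne : ∀ i, ∃ c, InC R x c ∧ D c = i)
    (hinf : a true ⊓ a false ≤ f x) (hga : ∀ i, f x ≤ a i) : Compat R f (fNew R x D f a) := by
  constructor
  · intro y z h
    by_cases hz : InC R x z
    · rw [fNew_in hz]
      exact ((hf.mono _ _ h).trans (hf.eqC hz).le).trans (hga _)
    · rw [fNew_out hz]; exact hf.mono _ _ h
  · intro y t h
    by_cases hy : InC R x y
    · rw [hf.eqC hy]
      refine le_trans (le_inf ?_ ?_) hinf
      · obtain ⟨c, hc, hD⟩ := hne true
        have := h c (InC_rel hR hy hc)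
        rwa [fNew_in hc, hD] at this
      · obtain ⟨c, hc, hD⟩ := hne false
        have := h c (InC_rel hR hy hc)
        rwa [fNew_in hc, hD] at this
    · have := h y (hR.refl y)
      rwa [fNew_out hy] at this

variable [Fintype Q]

/-- the gplus bound -/
theorem gplus_le (hR : PreRel R) {v : Q} (hv : ¬ InC R x v) (h : R x v) :
    pinf (Ind R x D true) f ⊓ pinf (Ind R x D false) f ≤ f v := by
  obtain ⟨w, hw, h1, h2⟩ := hR.bis _ _ h
  cases hD : D w with
  | true => exact inf_le_left.trans (pinf_le ⟨hv, w, ⟨h1, h2⟩, hD, hw⟩)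
  | false => exact inf_le_right.trans (pinf_le ⟨hv, w, ⟨h1, h2⟩, hD, hw⟩)

theorem mixed_sup (hR : PreRel R) (hR' : PreRel (relNew R x D)) (hf : GoodFn R f) {a : Bool → H}
    (hga : ∀ i, f x ≤ a i)
    (hP : ∀ i, pinf (Ind R x D i) f ≤ a i ⊔ pinf (Ind R x D (!i)) f)
    {u v : Q} (hu : InC R x u) (hvx : ¬ R v x) (t : H)
    (ht : ∀ z, ¬ InC R x z → relNew R x D u z → R v z → t ≤ f z) : t ≤ a (D u) ⊔ f v := by
  have h1 : t ≤ pinf (Ind R x D (D u)) f ⊔ f v := by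
    apply le_pinf_sup
    intro y hy
    apply hf.sup
    intro z hyz hvz
    have hzC : ¬ InC R x z := fun h => hvx (hR.trans _ _ _ hvz h.1)
    exact ht z hzC (hR'.trans _ _ _ (relNew_of_ind hR hu hy) (relNew_of_not hR hy.1 hyz)) hvz
  have h2 : t ⊓ pinf (Ind R x D (!(D u))) f ≤ a (D u) ⊔ f v := by
    refine le_trans ?_ (sup_le_sup_right (hga (D u)) _)
    apply hf.sup
    intro z hxz hvz
    have hzC : ¬ InC R x z := fun h => hvx (hR.trans _ _ _ hvz h.1)
    obtain ⟨w, hw, h1, h2⟩ := hR.bis _ _ hxz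
    by_cases hD : D w = D u
    · exact inf_le_left.trans (ht z hzC (relNew_of_ind hR hu ⟨hzC, w, ⟨h1, h2⟩, hD, hw⟩) hvz)
    · refine inf_le_right.trans (pinf_le ⟨hzC, w, ⟨h1, h2⟩, ?_, hw⟩)
      revert hD; cases D w <;> cases D u <;> simp
  have h3 : t ⊓ pinf (Ind R x D (D u)) f ≤ a (D u) ⊔ f v := by
    refine (inf_le_inf_left t (hP (D u))).trans ?_
    rw [inf_sup_left]
    exact sup_le (inf_le_right.trans le_sup_left) h2
  calc t ≤ t ⊓ (pinf (Ind R x D (D u)) f ⊔ f v) := le_inf le_rfl h1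
    _ ≤ _ := by
      rw [inf_sup_left]
      exact sup_le h3 (inf_le_right.trans le_sup_right)

theorem goodFn_fNew (hR : PreRel R) (hR' : PreRel (relNew R x D)) (hf : GoodFn R f) {a : Bool → H}
    (hne : ∀ i, ∃ c, InC R x c ∧ D c = i)
    (hinf : a true ⊓ a false ≤ f x) (hga : ∀ i, f x ≤ a i)
    (hah : ∀ i, a i ≤ pinf (Ind R x D i) f)
    (hP : ∀ i, pinf (Ind R x D i) f ≤ a i ⊔ pinf (Ind R x D (!i)) f)
    (hQ : ∀ i, (pinf (Ind R x D true) f ⊓ pinf (Ind R x D false) f) ⇨ a i ≤ a i)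
    (htop : ∀ i, a i ≠ ⊤)
    (hmono : ∀ u v, InC R x u → InC R x v → relNew R x D u v → a (D u) ≤ a (D v))
    (hhimp : ∀ u v, InC R x u → InC R x v → ¬ relNew R x D v u → a (D v) ⇨ a (D u) ≤ a (D u))
    (hsup : ∀ u v, InC R x u → InC R x v → ¬ relNew R x D u v → ¬ relNew R x D v u →
      pinf (Ind R x D (D u)) f ⊔ pinf (Ind R x D (D v)) f ≤ a (D u) ⊔ a (D v)) :
    GoodFn (relNew R x D) (fNew R x D f a) := by
  have hc := compat_fNew hR hf hne hinf hga
  have hmono' : ∀ u v, relNew R x D u v → fNew R x D f a u ≤ fNew R x D f a v := by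
    intro u v h
    by_cases hu : InC R x u
    · by_cases hv : InC R x v
      · rw [fNew_in hu, fNew_in hv]; exact hmono u v hu hv h
      · rw [fNew_in hu, fNew_out hv]
        exact (hah _).trans (pinf_le (ind_of_relNew hR hu hv h))
    · rw [fNew_out hu]
      exact hc.le _ _ (relNew_sub hR h)
  refine ⟨hmono', ?_, ?_, ?_, ?_⟩
  · intro u v t ht
    by_cases huv : relNew R x D u v
    · exact (ht v huv (hR'.refl v)).trans le_sup_right
    by_cases hvu : relNew R x D v u
    · exact (ht u (hR'.refl u) hvu).trans le_sup_left
    by_cases hu : InC R x u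
    · by_cases hv : InC R x v
      · rw [fNew_in hu, fNew_in hv]
        refine le_trans ?_ (hsup u v hu hv huv hvu)
        apply le_pinf_sup
        intro y hy
        rw [sup_comm]
        apply le_pinf_sup
        intro y' hy'
        rw [sup_comm]
        apply hf.sup
        intro z hz hz'
        have hzC : ¬ InC R x z := by
          intro hzC
          obtain ⟨hyC, c, hcC, -, hcy⟩ := hy
          exact hyC ⟨hR.trans _ _ _ hz hzC.1, hR.trans _ _ _ hcC.2 (hR.le _ _ hcy)⟩
        have := ht z (hR'.trans _ _ _ (relNew_of_ind hR hu hy) (relNew_of_not hR hy.1 hz))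
          (hR'.trans _ _ _ (relNew_of_ind hR hv hy') (relNew_of_not hR hy'.1 hz'))
        rwa [fNew_out hzC] at this
      · rw [fNew_in hu, fNew_out hv]
        have hvx : ¬ R v x := fun h => hvu (relNew_of_not hR hv (hR.trans _ _ _ h hu.2))
        apply mixed_sup hR hR' hf hga hP hu hvx
        intro z hz h1 h2
        have := ht z h1 (relNew_of_not hR hv h2)
        rwa [fNew_out hz] at this
    · by_cases hv : InC R x v
      · rw [fNew_in hv, fNew_out hu, sup_comm]
        have hux : ¬ R u x := fun h => huv (relNew_of_not hR hu (hR.trans _ _ _ h hv.2))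
        apply mixed_sup hR hR' hf hga hP hv hux
        intro z hz h1 h2
        have := ht z (relNew_of_not hR hu h2) h1
        rwa [fNew_out hz] at this
      · rw [fNew_out hu, fNew_out hv]
        apply hf.sup
        intro z h1 h2
        apply hc.ge
        intro y hy
        exact ht y (relNew_of_not hR hu (hR.trans _ _ _ h1 hy)) (relNew_of_not hR hv (hR.trans _ _ _ h2 hy))
  · intro t ht
    apply hf.bot
    intro z
    exact hc.ge _ _ fun y _ => ht y
  · intro u v h
    by_cases hv : InC R x v
    · by_cases hu : InC R x u
      · rw [fNew_in hu, fNew_in hv]; exact hhimp u v hu hv h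
      · rw [fNew_out hu, fNew_in hv]
        by_cases hvu : R v u
        · have hxu : R x u := hR.trans _ _ _ hv.2 hvu
          have h2 : pinf (Ind R x D (!(D v))) f ≤ f u := by
            obtain ⟨w, hw, h1, h2⟩ := hR.bis _ _ hxu
            refine pinf_le ⟨hu, w, ⟨h1, h2⟩, ?_, hw⟩
            have : D w ≠ D v := fun hD => h (relNew_of_ind hR hv ⟨hu, w, ⟨h1, h2⟩, hD, hw⟩)
            revert this; cases D w <;> cases D v <;> simp
          have h3 : pinf (Ind R x D (D v)) f ≤ a (D v) ⊔ f u :=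
            (hP _).trans (sup_le_sup_left h2 _)
          calc a (D v) ⇨ f u = (a (D v) ⊔ f u) ⇨ f u := by rw [sup_himp_distrib]; simp
            _ ≤ pinf (Ind R x D (D v)) f ⇨ f u := himp_le_himp_right h3
            _ ≤ f u := by
              apply pinf_himp_le
              intro y hy
              apply hf.himp
              intro hyu
              exact h (hR'.trans _ _ _ (relNew_of_ind hR hv hy) (relNew_of_not hR hy.1 hyu))
        · have h1 := hf.himp u v hvu
          rw [hf.eqC hv] at h1
          exact (himp_le_himp_right (hga _)).trans h1
    · have hvu : ¬ R v u := fun h' => h (relNew_of_not hR hv h')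
      rw [fNew_out hv]
      by_cases hu : InC R x u
      · rw [fNew_in hu]
        have hvx : ¬ R v x := fun h' => hvu (hR.trans _ _ _ h' hu.2)
        have h1 : pinf (Ind R x D true) f ⊓ pinf (Ind R x D false) f ≤ f v ⊔ a (D u) := by
          refine le_trans ?_ (sup_le_sup_left (hga (D u)) _)
          apply hf.sup
          intro z h1 h2
          exact gplus_le hR (fun hz => hvx (hR.trans _ _ _ h1 hz.1)) h2
        calc f v ⇨ a (D u) = (f v ⊔ a (D u)) ⇨ a (D u) := by rw [sup_himp_distrib]; simp
            _ ≤ _ := himp_le_himp_right h1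
            _ ≤ _ := hQ _
      · rw [fNew_out hu]
        exact hf.himp _ _ hvu
  · intro u
    by_cases hu : InC R x u
    · rw [fNew_in hu]; exact htop _
    · rw [fNew_out hu]; exact hf.ne_top _

theorem gplus_himp (hR : PreRel R) (hf : GoodFn R f) :
    (pinf (Ind R x D true) f ⊓ pinf (Ind R x D false) f) ⇨ f x ≤ f x := by
  have key : ∀ i, pinf (Ind R x D i) f ⇨ f x ≤ f x := by
    intro i
    apply pinf_himp_le
    rintro v ⟨hv, c, hc, -, hcv⟩
    apply hf.himp
    intro h
    exact hv ⟨h, hR.trans _ _ _ hc.2 (hR.le _ _ hcv)⟩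
  rw [← himp_himp]
  exact (himp_le_himp_left (key _)).trans (key _)

theorem le_hi (hR : PreRel R) (hf : GoodFn R f) (i : Bool) : f x ≤ pinf (Ind R x D i) f := by
  rw [le_pinf]
  rintro v ⟨hv, c, hc, -, hcv⟩
  exact hf.mono _ _ (hR.trans _ _ _ hc.2 (hR.le _ _ hcv))

/-- the antichain case -/
theorem beta_step (hs : HasSplitting H) (hR : PreRel R) (hf : GoodFn R f)
    (hab : ∀ v s, R x v → ¬ R v x → R v s → R s v → v = s)
    (hanti : ∀ w v, InC R x w → InC R x v → w ≤ v → w = v)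
    (hne : ∀ i, ∃ c, InC R x c ∧ D c = i) :
    ∃ a, PreRel (relNew R x D) ∧ GoodFn (relNew R x D) (fNew R x D f a) ∧ Compat R f (fNew R x D f a) := by
  have hR' : PreRel (relNew R x D) := by
    apply preRel_relNew hR hab
    intro w v s hw hv hs hwv hD
    have := hanti w v hw hv hwv
    subst this
    exact ⟨s, le_rfl, hs, hD⟩
  obtain ⟨a₁, a₂, t1, t2, e1, e2, l1, l2, hsup⟩ := hs (f x) (pinf (Ind R x D true) f)
    (pinf (Ind R x D false) f)
    ⟨le_antisymm (gplus_himp hR hf) le_himp, le_inf (le_hi hR hf _) (le_hi hR hf _)⟩ (hf.ne_top x)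
  have g1 : f x ≤ a₁ := e1 ▸ le_himp
  have g2 : f x ≤ a₂ := e2 ▸ le_himp
  have hinf : a₁ ⊓ a₂ ≤ f x := by rw [← e1]; exact himp_inf_le
  have hga : ∀ i, f x ≤ (fun i : Bool => bif i then a₁ else a₂) i := by
    rintro (_ | _) <;> simpa
  have hRD : ∀ u v, InC R x u → InC R x v → relNew R x D u v → D u = D v := by
    rintro u v hu hv ⟨w, hw, h1, h2, h3⟩
    have hwC := InC_of hR hu h2 h1
    have := hanti w v hwC hv hw
    subst this
    exact (h3 hwC).symm
  have hgp := gplus_himp (x := x) (D := D) hR hf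
  refine ⟨fun i => bif i then a₁ else a₂, hR',
    goodFn_fNew hR hR' hf hne hinf hga ?_ ?_ ?_ ?_ ?_ ?_ ?_, compat_fNew hR hf hne hinf hga⟩
  · rintro (_ | _) <;> simpa
  · rintro (_ | _)
    · refine (le_sup_right.trans hsup.ge).trans ?_
      simp only [cond_false, Bool.not_false]
      exact sup_le (l1.trans le_sup_right) le_sup_left
    · refine (le_sup_left.trans hsup.ge).trans ?_
      simp only [cond_true, Bool.not_true]
      exact sup_le le_sup_left (l2.trans le_sup_right)
  · rintro (_ | _)
    · simp only [cond_false]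
      conv_lhs => rw [← e2]
      rw [himp_left_comm]
      exact (himp_le_himp_left hgp).trans e2.le
    · simp only [cond_true]
      conv_lhs => rw [← e1]
      rw [himp_left_comm]
      exact (himp_le_himp_left hgp).trans e1.le
  · rintro (_ | _) <;> simpa
  · intro u v hu hv h
    rw [hRD u v hu hv h]
  · intro u v hu hv h
    have hD : D u ≠ D v := fun hD => h (relNew_part hR hv hu hD.symm)
    have q1 : a₁ ⇨ a₂ ≤ a₂ := by
      conv_lhs => rw [← e2]
      rw [himp_himp, inf_idem]; exact e2.le
    have q2 : a₂ ⇨ a₁ ≤ a₁ := by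
      conv_lhs => rw [← e1]
      rw [himp_himp, inf_idem]; exact e1.le
    revert hD
    cases D u <;> cases D v <;> simp [q1, q2, -le_himp_iff]
  · intro u v hu hv h h'
    have hD : D u ≠ D v := fun hD => h (relNew_part hR hu hv hD)
    revert hD
    cases D u <;> cases D v <;> intro hD
    · simp at hD
    · simp only [cond_true, cond_false]
      rw [sup_comm, sup_comm a₂]; exact hsup.ge
    · exact hsup.ge
    · simp at hD

/-- the chain case -/
theorem alpha_step (hd : HasDensity H) (hs : HasSplitting H) (hR : PreRel R) (hf : GoodFn R f)
    (hab : ∀ v s, R x v → ¬ R v x → R v s → R s v → v = s)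
    (hmin : ∀ v, InC R x v → ∃ r, r ≤ v ∧ InC R x r ∧ D r = false)
    (hmin' : ∀ w v, InC R x w → InC R x v → w ≤ v → D v = false → w = v)
    (hne : ∀ i, ∃ c, InC R x c ∧ D c = i) :
    ∃ a, PreRel (relNew R x D) ∧ GoodFn (relNew R x D) (fNew R x D f a) ∧ Compat R f (fNew R x D f a) := by
  have hR' : PreRel (relNew R x D) := by
    apply preRel_relNew hR hab
    intro w v s hw hv hs hwv hD
    cases hDw : D w with
    | false => exact hmin s hs
    | true =>
      cases hDv : D v with
      | false =>
        have := hmin' w v hw hv hwv hDv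
        subst this
        simp [hDw] at hDv
      | true => exact ⟨s, le_rfl, hs, hD.trans hDv⟩
  have hh : pinf (Ind R x D false) f ≤ pinf (Ind R x D true) f := by
    rw [le_pinf]
    rintro v ⟨hv, c, hc, -, hcv⟩
    obtain ⟨r, hr, hrC, hD⟩ := hmin c hc
    exact pinf_le ⟨hv, r, hrC, hD, hr.trans hcv⟩
  have hgp := gplus_himp (x := x) (D := D) hR hf
  rw [inf_eq_right.2 hh] at hgp
  have l1 := le_hi (x := x) (D := D) hR hf true
  have l2 := le_hi (x := x) (D := D) hR hf false
  have hQeq := inf_eq_right.2 hh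
  generalize hh1 : pinf (Ind R x D true) f = h1 at *
  generalize hh2 : pinf (Ind R x D false) f = h2 at *
  obtain ⟨b, bt, hb1, hb2⟩ := hd (f x) h2 ⟨le_antisymm hgp le_himp, l2⟩ (hf.ne_top x)
  obtain ⟨b₁, b₂, t1, t2, e1, e2, k1, k2, hsup⟩ := hs b h1 h2
    (by rw [hQeq]; exact hb1) bt
  have hbb : b ≤ b₁ := e1 ▸ le_himp
  have g1 : f x ≤ b₁ := hb2.2.trans hbb
  have hinf : b₁ ⊓ f x ≤ f x := inf_le_right
  have hga : ∀ i, f x ≤ (fun i : Bool => bif i then b₁ else f x) i := by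
    rintro (_ | _) <;> simpa
  have hRf : ∀ u v, InC R x u → InC R x v → D u = false → relNew R x D u v := by
    intro u v hu hv hD
    obtain ⟨r, hr, hrC, hDr⟩ := hmin v hv
    exact ⟨r, hr, InC_rel hR hrC hu, InC_rel hR hu hrC, fun _ => hDr.trans hD.symm⟩
  refine ⟨fun i => bif i then b₁ else f x, hR',
    goodFn_fNew hR hR' hf hne hinf hga ?_ ?_ ?_ ?_ ?_ ?_ ?_, compat_fNew hR hf hne hinf hga⟩
  · rintro (_ | _)
    · simpa [hh2]
    · simpa [hh1]
  · rintro (_ | _)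
    · simp only [cond_false, Bool.not_false, hh1, hh2]
      exact hh.trans le_sup_right
    · simp only [cond_true, Bool.not_true, hh1, hh2]
      exact (le_sup_left.trans hsup.ge).trans (sup_le_sup_left k2 _)
  · rw [hh1, hh2, hQeq]
    rintro (_ | _)
    · exact hgp
    · simp only [cond_true]
      conv_lhs => rw [← e1]
      rw [himp_left_comm]
      exact (himp_le_himp_left hb1.1.le).trans e1.le
  · rintro (_ | _)
    · exact hf.ne_top x
    · exact t1
  · intro u v hu hv h
    cases hDu : D u <;> cases hDv : D v
    · exact le_rfl
    · exact g1
    · exfalso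
      obtain ⟨w, hw, q1, q2, q3⟩ := h
      have hwC := InC_of hR hu q2 q1
      have := hmin' w v hwC hv hw hDv
      subst this
      have := q3 hwC
      simp [hDu, hDv] at this
    · exact le_rfl
  · intro u v hu hv h
    have hDv : D v = true := by
      by_contra hc
      exact h (hRf v u hv hu (by simpa using hc))
    have hDu : D u = false := by
      by_contra hc
      exact h (relNew_part hR hv hu (hDv.trans (by simpa using hc : D u = true).symm))
    rw [hDu, hDv]
    exact (himp_le_himp_right hbb).trans hb2.1.le
  · intro u v hu hv h h'
    exfalso
    have hDv : D v = true := by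
      by_contra hc
      exact h' (hRf v u hv hu (by simpa using hc))
    have hDu : D u = true := by
      by_contra hc
      exact h (hRf u v hu hv (by simpa using hc))
    exact h (relNew_part hR hu hv (hDu.trans hDv.symm))

theorem one_step (hd : HasDensity H) (hs : HasSplitting H) (hR : PreRel R) (hf : GoodFn R f)
    (hn : ¬ ∀ u v, R u v → u ≤ v) :
    ∃ (R₁ : Q → Q → Prop) (f₁ : Q → H), PreRel R₁ ∧ GoodFn R₁ f₁ ∧ Compat R f f₁ ∧
      (∀ u v, R₁ u v → R u v) ∧ ∃ u v, R u v ∧ ¬ R₁ u v := by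
  classical
  -- choose a maximal nontrivial class
  let N : Finset Q := Finset.univ.filter fun c => ∃ d, R c d ∧ R d c ∧ c ≠ d
  have hN : N.Nonempty := by
    push Not at hn
    obtain ⟨u, v, huv, hnot⟩ := hn
    obtain ⟨w, hw, h1, h2⟩ := hR.bis _ _ huv
    refine ⟨u, ?_⟩
    simp only [N, Finset.mem_filter, Finset.mem_univ, true_and]
    exact ⟨w, h2, h1, fun h => hnot (h ▸ hw)⟩
  obtain ⟨x, hxN, hmax⟩ := Finset.exists_max_image N
    (fun c => (Finset.univ.filter fun z => R z c).card) hN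
  have hab : ∀ v s, R x v → ¬ R v x → R v s → R s v → v = s := by
    intro v s hxv hvx h1 h2
    by_contra hne
    have hvN : v ∈ N := by
      simp only [N, Finset.mem_filter, Finset.mem_univ, true_and]
      exact ⟨s, h1, h2, hne⟩
    have := hmax v hvN
    have hlt : (Finset.univ.filter fun z => R z x).card < (Finset.univ.filter fun z => R z v).card := by
      apply Finset.card_lt_card
      rw [Finset.ssubset_iff_of_subset]
      · exact ⟨v, by simp [hR.refl v], by simpa using hvx⟩
      · intro z hz
        simp only [Finset.mem_filter, Finset.mem_univ, true_and] at hz ⊢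
        exact hR.trans _ _ _ hz hxv
    omega
  obtain ⟨y, hxy, hyx, hne⟩ : ∃ d, R x d ∧ R d x ∧ x ≠ d := by
    simpa only [N, Finset.mem_filter, Finset.mem_univ, true_and] using hxN
  have hxC : InC R x x := ⟨hR.refl x, hR.refl x⟩
  have hyC : InC R x y := ⟨hyx, hxy⟩
  by_cases hanti : ∀ w v, InC R x w → InC R x v → w ≤ v → w = v
  · have hne' : ∀ i, ∃ c, InC R x c ∧ (fun c => decide (c = x)) c = i := by
      rintro (_ | _)
      · exact ⟨y, hyC, by simpa using hne.symm⟩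
      · exact ⟨x, hxC, by simp⟩
    obtain ⟨a, p1, p2, p3⟩ := beta_step (D := fun c => decide (c = x)) hs hR hf hab hanti hne'
    refine ⟨_, _, p1, p2, p3, fun u v => relNew_sub hR, x, y, hxy, ?_⟩
    rintro ⟨w, hw, h1, h2, h3⟩
    have hwC : InC R x w := ⟨h1, h2⟩
    have h4 := hanti w y hwC hyC hw
    have h5 := h3 hwC
    simp only [decide_true, decide_eq_true_eq] at h5
    exact hne (h5.symm.trans h4)
  · push Not at hanti
    obtain ⟨w, v, hw, hv, hwv, hwne⟩ := hanti
    let D : Q → Bool := fun c => decide (∃ w, InC R x w ∧ w < c)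
    have hmin : ∀ v, InC R x v → ∃ r, r ≤ v ∧ InC R x r ∧ D r = false := by
      intro v hv
      obtain ⟨m, hm, hmm⟩ := (Set.toFinite {c | InC R x c}).exists_le_minimal hv
      refine ⟨m, hm, hmm.1, ?_⟩
      simp only [D, decide_eq_false_iff_not]
      rintro ⟨w, hw, hlt⟩
      exact absurd (hmm.2 hw hlt.le) (not_le_of_gt hlt)
    have hmin' : ∀ w v, InC R x w → InC R x v → w ≤ v → D v = false → w = v := by
      intro w v hw hv hwv hD
      simp only [D, decide_eq_false_iff_not] at hD
      by_contra hc
      exact hD ⟨w, hw, lt_of_le_of_ne hwv hc⟩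
    have hvD : D v = true := by
      simp only [D, decide_eq_true_eq]
      exact ⟨w, hw, lt_of_le_of_ne hwv hwne⟩
    obtain ⟨r, hr, hrC, hrD⟩ := hmin v hv
    have hne' : ∀ i, ∃ c, InC R x c ∧ D c = i := by
      rintro (_ | _)
      · exact ⟨r, hrC, hrD⟩
      · exact ⟨v, hv, hvD⟩
    obtain ⟨a, p1, p2, p3⟩ := alpha_step hd hs hR hf hab hmin hmin' hne'
    refine ⟨_, _, p1, p2, p3, fun u v => relNew_sub hR, v, r, InC_rel hR hv hrC, ?_⟩
    rintro ⟨q, hq, h1, h2, h3⟩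
    have hqC := InC_of hR hv h2 h1
    have h4 := hmin' q r hqC hrC hq hrD
    have h5 := h3 hqC
    rw [h4, hrD, hvD] at h5
    simp at h5

theorem all_steps (hd : HasDensity H) (hs : HasSplitting H) (n : ℕ) :
    ∀ (R : Q → Q → Prop) (f : Q → H), {p : Q × Q | R p.1 p.2}.ncard ≤ n → PreRel R → GoodFn R f →
      ∃ k : Q → H, GoodFn (fun u v => u ≤ v) k ∧ Compat R f k := by
  induction n with
  | zero =>
    intro R f hn hR hf
    have h0 : {p : Q × Q | R p.1 p.2} = ∅ := (Set.ncard_eq_zero (Set.toFinite _)).1 (by omega)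
    have hno : ∀ u v, ¬ R u v := fun u v h => by
      have : (u, v) ∈ {p : Q × Q | R p.1 p.2} := h
      rw [h0] at this; exact this
    have he : ∀ u : Q, False := fun u => hno u u (hR.refl u)
    exact ⟨f, ⟨fun u => (he u).elim, fun u => (he u).elim, fun t ht => hf.bot t ht,
      fun u => (he u).elim, fun u => (he u).elim⟩, fun u => (he u).elim, fun u => (he u).elim⟩
  | succ n ih =>
    intro R f hn hR hf
    by_cases hle : ∀ u v, R u v → u ≤ v
    · have hRe : R = fun u v => u ≤ v := by
        funext u v
        exact propext ⟨hle u v, hR.le u v⟩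
      refine ⟨f, hRe ▸ hf, fun u v h => hf.mono _ _ h, fun u t h => h u (hR.refl u)⟩
    · obtain ⟨R₁, f₁, h1, h2, h3, hsub, u, v, huv, hnuv⟩ := one_step hd hs hR hf hle
      have hlt : {p : Q × Q | R₁ p.1 p.2}.ncard < {p : Q × Q | R p.1 p.2}.ncard := by
        apply Set.ncard_lt_ncard _ (Set.toFinite _)
        have hss : {p : Q × Q | R₁ p.1 p.2} ⊆ {p : Q × Q | R p.1 p.2} := fun p hp => hsub _ _ hp
        exact (Set.ssubset_iff_of_subset hss).2 ⟨(u, v), huv, hnuv⟩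
      obtain ⟨k, hk, hc⟩ := ih R₁ f₁ (by omega) h1 h2
      refine ⟨k, hk, ?_, ?_⟩
      · intro y z hyz
        exact (h3.le _ _ hyz).trans (hc.le _ _ (h1.refl z))
      · intro y t ht
        apply h3.ge
        intro z hz
        apply hc.ge
        intro z' hz'
        exact ht z' (hR.trans _ _ _ hz (hsub _ _ hz'))
end Step

section Fin
variable {H A B : Type*} [HeytingAlgebra H] [HeytingAlgebra A] [HeytingAlgebra B]

theorem primes_le [Finite B] (b t : B) (h : ∀ q : B, InfPrime q → b ≤ q → t ≤ q) : t ≤ b := by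
  obtain ⟨s, hs, hs'⟩ := exists_infIrred_decomposition b
  rw [← hs, Finset.le_inf_iff]
  intro q hq
  apply h q (infPrime_iff_infIrred.2 (hs' hq))
  rw [← hs]
  exact Finset.inf_le hq

/-- below a prime above `b ⇨ c` there is a prime above `c`, not above `b` -/
theorem prime_himp [Finite B] (b c q : B) (hq : InfPrime q) (h : b ⇨ c ≤ q) :
    ∃ r, InfPrime r ∧ r ≤ q ∧ c ≤ r ∧ ¬ b ≤ r := by
  classical
  have := Fintype.ofFinite B
  by_contra hcon
  push Not at hcon
  have h1 : (Finset.univ.filter fun r : B => InfPrime r ∧ c ≤ r ∧ ¬ b ≤ r).inf id ≤ q := by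
    refine le_trans ?_ h
    rw [le_himp_iff]
    apply primes_le
    intro r hr hcr
    by_cases hbr : b ≤ r
    · exact inf_le_right.trans hbr
    · exact inf_le_left.trans (Finset.inf_le (f := id) (Finset.mem_filter.2 ⟨Finset.mem_univ _, hr, hcr, hbr⟩))
  rw [hq.finset_inf_le] at h1
  obtain ⟨r, hr, hrq⟩ := h1
  simp only [Finset.mem_filter, Finset.mem_univ, true_and] at hr
  exact hr.2.2 (hcon r hr.1 hrq hr.2.1)

theorem exists_hom [Fintype {q : B // InfPrime q}] [Finite B] (f : {q : B // InfPrime q} → H)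
    (hf : GoodFn (fun u v => u ≤ v) f) :
    ∃ k : HeytingHom B H, Function.Injective k ∧ ∀ b, k b = pinf (fun q => b ≤ q.1) f := by
  let k : B → H := fun b => pinf (fun q => b ≤ q.1) f
  have kmono : ∀ b c, b ≤ c → k b ≤ k c := fun b c h =>
    le_pinf.2 fun v hv => pinf_le (h.trans hv)
  have kinf : ∀ b c, k (b ⊓ c) = k b ⊓ k c := by
    intro b c
    apply le_antisymm
    · exact le_inf (kmono _ _ inf_le_left) (kmono _ _ inf_le_right)
    · refine le_pinf.2 fun v hv => ?_
      rcases v.2.2 hv with h | h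
      · exact inf_le_left.trans (pinf_le h)
      · exact inf_le_right.trans (pinf_le h)
  have khimp : ∀ b (r : {q : B // InfPrime q}), ¬ b ≤ r.1 → k b ⇨ f r ≤ f r := by
    intro b r hr
    apply pinf_himp_le
    intro y hy
    apply hf.himp
    exact fun h => hr (hy.trans h)
  refine ⟨{ toFun := k, map_sup' := ?_, map_inf' := kinf, map_bot' := ?_, map_himp' := ?_ }, ?_, fun b => rfl⟩
  · intro b c
    apply le_antisymm
    · apply le_pinf_sup
      intro v hv
      rw [sup_comm (f v)]
      apply le_pinf_sup
      intro w hw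
      apply hf.sup
      intro z hz hz'
      exact pinf_le (sup_le (hv.trans hz') (hw.trans hz))
    · exact sup_le (kmono _ _ le_sup_left) (kmono _ _ le_sup_right)
  · apply le_bot_iff.1
    apply hf.bot
    intro z
    exact pinf_le bot_le
  · intro b c
    apply le_antisymm
    · rw [le_himp_iff]
      change k (b ⇨ c) ⊓ k b ≤ k c
      rw [← kinf]
      exact kmono _ _ himp_inf_le
    · refine le_pinf.2 fun q hq => ?_
      obtain ⟨r, hr, hrq, hcr, hbr⟩ := prime_himp b c q.1 q.2 hq
      calc k b ⇨ k c ≤ k b ⇨ f ⟨r, hr⟩ := himp_le_himp_left (pinf_le hcr)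
        _ ≤ f ⟨r, hr⟩ := khimp _ _ hbr
        _ ≤ f q := hf.mono _ _ hrq
  · have key : ∀ b c, k b ≤ k c → b ≤ c := by
      intro b c h
      apply primes_le
      intro r hr hcr
      by_contra hbr
      have h1 := khimp b ⟨r, hr⟩ hbr
      have h2 : k b ≤ f ⟨r, hr⟩ := h.trans (pinf_le hcr)
      rw [himp_eq_top_iff.2 h2] at h1
      exact hf.ne_top _ (top_le_iff.1 h1)
    intro b c h
    exact le_antisymm (key _ _ (le_of_eq h)) (key _ _ (le_of_eq h.symm))
end Fin

theorem finite_embeds_over_of_density_splitting (H : Type*) [HeytingAlgebra H]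
    (hd : HasDensity H) (hs : HasSplitting H)
    (A B : Type*) [HeytingAlgebra A] [HeytingAlgebra B] [Finite A] [Finite B]
    (i : HeytingHom A H) (hi : Function.Injective i)
    (j : HeytingHom A B) (hj : Function.Injective j) :
    ∃ k : HeytingHom B H, Function.Injective k ∧ k.comp j = i := by
  classical
  have := Fintype.ofFinite A
  have := Fintype.ofFinite {q : B // InfPrime q}
  have hjle : ∀ a b, j a ≤ j b → a ≤ b := by
    intro a b h
    have : j (a ⊓ b) = j a := by rw [map_inf]; exact inf_eq_left.2 h
    exact inf_eq_left.1 (hj this)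
  let g : {q : B // InfPrime q} → A := fun q => (Finset.univ.filter fun a => j a ≤ q.1).sup id
  have hg : ∀ a q, a ≤ g q ↔ j a ≤ q.1 := by
    intro a q
    have h1 : j (g q) ≤ q.1 := by
      simp only [g]
      rw [map_finset_sup, Finset.sup_le_iff]
      intro b hb
      simpa using hb
    constructor
    · exact fun h => (OrderHomClass.mono j h).trans h1
    · intro h
      exact Finset.le_sup (f := id) (by simpa using h)
  have hgp : ∀ q a b, a ⊓ b ≤ g q → a ≤ g q ∨ b ≤ g q := by
    intro q a b h
    rw [hg, map_inf] at h
    rw [hg, hg]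
    exact q.2.2 h
  have hA : ∀ a t : A, (∀ q, a ≤ g q → t ≤ g q) → t ≤ a := by
    intro a t h
    apply hjle
    apply primes_le
    intro q hq haq
    exact (hg t ⟨q, hq⟩).1 (h ⟨q, hq⟩ ((hg a ⟨q, hq⟩).2 haq))
  have hgt : ∀ q, g q ≠ ⊤ := by
    intro q h
    have h1 := (hg ⊤ q).1 h.ge
    rw [map_top] at h1
    exact q.2.1 (fun b _ => le_top.trans h1)
  let R : {q : B // InfPrime q} → {q : B // InfPrime q} → Prop := fun u v => g u ≤ g v
  have hR : PreRel R := by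
    refine ⟨?_, fun x y z => le_trans, ?_⟩
    · intro x y h
      exact (hg _ _).2 (((hg _ _).1 le_rfl).trans h)
    · intro z x h
      let c : A := (Finset.univ.filter fun a => ¬ a ≤ g z).inf id
      have hc : ∀ a, ¬ a ≤ g z → c ≤ a := fun a ha =>
        Finset.inf_le (f := id) (by simpa using ha)
      have hcz : ¬ c ≤ g z := by
        have : ∀ s : Finset A, (∀ a ∈ s, ¬ a ≤ g z) → ¬ s.inf id ≤ g z := by
          intro s
          induction s using Finset.induction_on with
          | empty => intro _ h; exact hgt z (top_le_iff.1 (by simpa using h))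
          | insert a s ha ih =>
            intro h1 h2
            rw [Finset.inf_insert] at h2
            rcases hgp z _ _ h2 with h3 | h3
            · exact h1 a (Finset.mem_insert_self _ _) h3
            · exact ih (fun b hb => h1 b (Finset.mem_insert_of_mem hb)) h3
        exact this _ (by simp)
      have h1 : c ⇨ g z ≤ g z := by
        rcases hgp z (c ⇨ g z) c himp_inf_le with h | h
        · exact h
        · exact absurd h hcz
      have h2 : j c ⇨ j (g z) ≤ x.1 := by
        rw [← map_himp]
        exact (hg _ _).1 (h1.trans h)
      obtain ⟨r, hr, hrx, hzr, hcr⟩ := prime_himp _ _ _ x.2 h2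
      refine ⟨⟨r, hr⟩, hrx, ?_, (hg _ ⟨r, hr⟩).2 hzr⟩
      by_contra hcon
      exact hcr ((hg _ ⟨r, hr⟩).1 (hc _ hcon))
  have himono : Monotone i := OrderHomClass.mono i
  have hinfA : ∀ (S : {q : B // InfPrime q} → Prop) (a : A) (t : H),
      (∀ u, (∀ z, S z → u ≤ g z) → u ≤ a) → (∀ z, S z → t ≤ i (g z)) → t ≤ i a := by
    intro S a t h1 h2
    have h3 : pinf S g ≤ a := h1 _ (fun z hz => pinf_le hz)
    refine le_trans ?_ (himono h3)
    unfold pinf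
    rw [map_finset_inf, Finset.le_inf_iff]
    intro z hz
    exact h2 z (by simpa using hz)
  have hf : GoodFn R (fun q => i (g q)) := by
    refine ⟨fun x y h => himono h, ?_, ?_, ?_, ?_⟩
    · intro x y t ht
      rw [← map_sup]
      apply hinfA (fun z => R x z ∧ R y z) _ _ _ (fun z hz => ht z hz.1 hz.2)
      intro u hu
      apply hA
      intro q hq
      exact hu q ⟨le_sup_left.trans hq, le_sup_right.trans hq⟩
    · intro t ht
      rw [← map_bot i]
      apply hinfA (fun z => True) _ _ _ (fun z _ => ht z)
      intro u hu
      exact hA _ _ fun q _ => hu q trivial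
    · intro x y h
      change i (g y) ⇨ i (g x) ≤ i (g x)
      rw [← map_himp]
      apply himono
      rcases hgp x (g y ⇨ g x) (g y) himp_inf_le with h' | h'
      · exact h'
      · exact absurd h' h
    · intro x h
      apply hgt x
      apply hi
      rw [map_top]; exact h
  obtain ⟨f, hgood, hcomp⟩ := all_steps hd hs _ R _ le_rfl hR hf
  obtain ⟨k, hk, hkf⟩ := exists_hom f hgood
  refine ⟨k, hk, ?_⟩
  ext a
  rw [HeytingHom.comp_apply, hkf]
  apply le_antisymm
  · apply hinfA (fun z => a ≤ g z) _ _ (fun u hu => hA _ _ hu)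
    intro z hz
    apply hcomp.ge
    intro y hy
    exact pinf_le ((hg _ _).1 (hz.trans hy))
  · rw [le_pinf]
    intro q hq
    exact (himono ((hg _ _).2 hq)).trans (hcomp.le q q le_rfl)
end

section
/- A countable, locally finite Heyting algebra H is existentially closed if and only if it has the Density property and the Splitting property. -/
/-- Formal Heyting terms in `n` variables. -/
inductive HeytingTerm (n : ℕ) : Type
  | var : Fin n → HeytingTerm n
  | bot : HeytingTerm n
  | top : HeytingTerm n
  | inf : HeytingTerm n → HeytingTerm n → HeytingTerm n
  | sup : HeytingTerm n → HeytingTerm n → HeytingTerm n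
  | himp : HeytingTerm n → HeytingTerm n → HeytingTerm n

namespace HeytingTerm

/-- Evaluation of a Heyting term in a Heyting algebra. -/
def eval {n : ℕ} {H : Type*} [HeytingAlgebra H] (v : Fin n → H) : HeytingTerm n → H
  | var i => v i
  | bot => ⊥
  | top => ⊤
  | inf a b => a.eval v ⊓ b.eval v
  | sup a b => a.eval v ⊔ b.eval v
  | himp a b => a.eval v ⇨ b.eval v

/-- The degree of a Heyting term: the maximal number of nested occurrences of `⇨`. -/
def degree {n : ℕ} : HeytingTerm n → ℕ
  | var _ => 0
  | bot => 0
  | top => 0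
  | inf a b => max a.degree b.degree
  | sup a b => max a.degree b.degree
  | himp a b => max a.degree b.degree + 1

end HeytingTerm

/-- `b` is a solution of the system `(t, s₁, …, s_κ)` with parameters `a`. -/
def IsSolution {l m κ : ℕ} {H : Type*} [HeytingAlgebra H]
    (t : HeytingTerm (l + m)) (s : Fin κ → HeytingTerm (l + m))
    (a : Fin l → H) (b : Fin m → H) : Prop :=
  t.eval (Fin.append a b) = ⊤ ∧ ∀ k, (s k).eval (Fin.append a b) ≠ ⊤

/-- The system `(t, s₁, …, s_κ)` with parameters `a` has a solution in `H`. -/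
def HasSolution {l m κ : ℕ} {H : Type*} [HeytingAlgebra H]
    (t : HeytingTerm (l + m)) (s : Fin κ → HeytingTerm (l + m)) (a : Fin l → H) : Prop :=
  ∃ b : Fin m → H, IsSolution t s a b

/-- A Heyting algebra is existentially closed if every system with parameters in `H`
having a solution in an extension of `H` already has a solution in `H`. -/
def IsExtClosed (H : Type*) [HeytingAlgebra H] : Prop :=
  ∀ (K : Type*) [HeytingAlgebra K] (f : HeytingHom H K), Function.Injective f →
    ∀ {l m κ : ℕ} (t : HeytingTerm (l + m)) (s : Fin κ → HeytingTerm (l + m)) (a : Fin l → H),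
      HasSolution t s (fun i => f (a i)) → HasSolution t s a

/-- A Heyting subalgebra: a subset containing `⊥`, `⊤` and closed under `⊓`, `⊔`, `⇨`. -/
structure HeytingSubalgebra (H : Type*) [HeytingAlgebra H] where
  carrier : Set H
  bot_mem : ⊥ ∈ carrier
  top_mem : ⊤ ∈ carrier
  inf_mem : ∀ {a b : H}, a ∈ carrier → b ∈ carrier → a ⊓ b ∈ carrier
  sup_mem : ∀ {a b : H}, a ∈ carrier → b ∈ carrier → a ⊔ b ∈ carrier
  himp_mem : ∀ {a b : H}, a ∈ carrier → b ∈ carrier → a ⇨ b ∈ carrier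

/-- A Heyting algebra is locally finite if every finite subset is contained in a finite
subalgebra. -/
def LocallyFiniteHA (H : Type*) [HeytingAlgebra H] : Prop :=
  ∀ s : Finset H, ∃ S : HeytingSubalgebra H, S.carrier.Finite ∧ ↑s ⊆ S.carrier

/-! ### Points (prime filters) of bounded distributive lattices -/

/-- A point of a bounded distributive lattice, i.e. a prime filter. -/
@[ext] structure Pt (D : Type*) [DistribLattice D] [BoundedOrder D] where
  carrier : Set D
  top_mem : ⊤ ∈ carrier
  bot_nmem : ⊥ ∉ carrier
  inf_mem : ∀ a b, a ⊓ b ∈ carrier ↔ a ∈ carrier ∧ b ∈ carrier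
  sup_mem : ∀ a b, a ⊔ b ∈ carrier ↔ a ∈ carrier ∨ b ∈ carrier

namespace Pt

section Basic

variable {D : Type*} [DistribLattice D] [BoundedOrder D]

instance instPartialOrderPt : PartialOrder (Pt D) :=
  PartialOrder.lift Pt.carrier (fun _ _ h => Pt.ext h)

theorem le_def {F G : Pt D} : F ≤ G ↔ ∀ a, a ∈ F.carrier → a ∈ G.carrier := Iff.rfl

theorem mono (F : Pt D) {a b : D} (h : a ≤ b) (ha : a ∈ F.carrier) : b ∈ F.carrier := by
  have := (F.inf_mem a b).1 (by rwa [inf_eq_left.2 h])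
  exact this.2

theorem exists_pt (S T : Set D) (hS : S.Nonempty) (hT : T.Nonempty)
    (hSi : ∀ a ∈ S, ∀ b ∈ S, a ⊓ b ∈ S) (hTs : ∀ a ∈ T, ∀ b ∈ T, a ⊔ b ∈ T)
    (h : ∀ a ∈ S, ∀ b ∈ T, ¬ a ≤ b) :
    ∃ F : Pt D, S ⊆ F.carrier ∧ ∀ b ∈ T, b ∉ F.carrier := by
  have hF : Order.IsPFilter {x : D | ∃ a ∈ S, a ≤ x} := by
    apply Order.IsPFilter.of_def
    · obtain ⟨a, ha⟩ := hS
      exact ⟨a, a, ha, le_rfl⟩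
    · rintro x ⟨a, ha, hax⟩ y ⟨b, hb, hby⟩
      exact ⟨a ⊓ b, ⟨a ⊓ b, hSi a ha b hb, le_rfl⟩, inf_le_left.trans hax, inf_le_right.trans hby⟩
    · rintro x y hxy ⟨a, ha, hax⟩
      exact ⟨a, ha, hax.trans hxy⟩
  have hI : Order.IsIdeal {x : D | ∃ b ∈ T, x ≤ b} := by
    refine ⟨?_, ?_, ?_⟩
    · rintro x y hxy ⟨a, ha, hax⟩
      exact ⟨a, ha, hxy.trans hax⟩
    · obtain ⟨a, ha⟩ := hT
      exact ⟨a, a, ha, le_rfl⟩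
    · rintro x ⟨a, ha, hax⟩ y ⟨b, hb, hby⟩
      exact ⟨a ⊔ b, ⟨a ⊔ b, hTs a ha b hb, le_rfl⟩, hax.trans le_sup_left, hby.trans le_sup_right⟩
  have hdis : Disjoint ((hF.toPFilter : Order.PFilter D) : Set D) (hI.toIdeal : Set D) := by
    rw [Set.disjoint_left]
    rintro x ⟨a, ha, hax⟩ ⟨b, hb, hxb⟩
    exact h a ha b hb (hax.trans hxb)
  obtain ⟨J, hJ, hIJ, hFJ⟩ := DistribLattice.prime_ideal_of_disjoint_filter_ideal hdis
  have hFJ' : ∀ x, (∃ a ∈ S, a ≤ x) → x ∉ J := fun x hx hxJ =>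
    (Set.disjoint_left.1 hFJ) hx hxJ
  have hIJ' : ∀ x, (∃ b ∈ T, x ≤ b) → x ∈ J := fun x hx => hIJ hx
  refine ⟨⟨{x | x ∉ J}, ?_, ?_, ?_, ?_⟩, ?_, ?_⟩
  · obtain ⟨a, ha⟩ := hS
    exact hFJ' _ ⟨a, ha, le_top⟩
  · obtain ⟨a, ha⟩ := hT
    exact fun hn => hn (hIJ' _ ⟨a, ha, bot_le⟩)
  · intro a b
    constructor
    · intro hab
      exact ⟨fun ha => hab (J.lower inf_le_left ha), fun hb => hab (J.lower inf_le_right hb)⟩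
    · rintro ⟨ha, hb⟩ hab
      rcases hJ.mem_or_mem hab with h | h
      · exact ha h
      · exact hb h
  · intro a b
    constructor
    · intro hab
      by_contra hn
      push Not at hn
      simp only [Set.mem_ofPred_eq, not_not] at hn
      exact hab (Order.Ideal.sup_mem hn.1 hn.2)
    · rintro (ha | hb) hab
      · exact ha (J.lower le_sup_left hab)
      · exact hb (J.lower le_sup_right hab)
  · intro a ha
    exact hFJ' a ⟨a, ha, le_rfl⟩
  · intro b hb hn
    exact hn (hIJ' b ⟨b, hb, le_rfl⟩)

theorem le_iff {a b : D} : a ≤ b ↔ ∀ F : Pt D, a ∈ F.carrier → b ∈ F.carrier := by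
  refine ⟨fun h F => F.mono h, fun h => ?_⟩
  by_contra hn
  obtain ⟨F, h1, h2⟩ := exists_pt {a} {b} ⟨a, rfl⟩ ⟨b, rfl⟩
    (by rintro x rfl y rfl; simp) (by rintro x rfl y rfl; simp) (by rintro x rfl y rfl; exact hn)
  exact h2 b rfl (h F (h1 rfl))

theorem eq_of {a b : D} (h : ∀ F : Pt D, a ∈ F.carrier ↔ b ∈ F.carrier) : a = b :=
  le_antisymm (le_iff.2 fun F => (h F).1) (le_iff.2 fun F => (h F).2)

theorem exists_nmem {a : D} (h : a ≠ ⊤) : ∃ F : Pt D, a ∉ F.carrier := by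
  by_contra hn
  push Not at hn
  exact h (eq_of fun F => ⟨fun _ => F.top_mem, fun _ => hn F⟩)

/-- Membership of a relative pseudo-complement in a point. -/
theorem rpc_mem {d e r : D} (hr : ∀ x, x ≤ r ↔ x ⊓ d ≤ e) (F : Pt D) :
    r ∈ F.carrier ↔ ∀ G : Pt D, F ≤ G → d ∈ G.carrier → e ∈ G.carrier := by
  constructor
  · intro h G hFG hd
    exact G.mono ((hr r).1 le_rfl) ((G.inf_mem _ _).2 ⟨hFG h, hd⟩)
  · intro h
    by_contra hn
    obtain ⟨G, h1, h2⟩ := exists_pt {x | ∃ f ∈ F.carrier, x = f ⊓ d} {e} ⟨_, ⊤, F.top_mem, rfl⟩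
      ⟨e, rfl⟩
      (by
        rintro _ ⟨f, hf, rfl⟩ _ ⟨g, hg, rfl⟩
        exact ⟨f ⊓ g, (F.inf_mem _ _).2 ⟨hf, hg⟩, inf_inf_distrib_right f g d |>.symm⟩)
      (by rintro x rfl y rfl; simp)
      (by
        rintro _ ⟨f, hf, rfl⟩ y rfl hle
        exact hn (F.mono ((hr f).2 hle) hf))
    refine h2 e rfl (h G ?_ ?_)
    · intro f hf
      exact G.mono inf_le_left (h1 ⟨f, hf, rfl⟩)
    · exact G.mono inf_le_right (h1 ⟨⊤, F.top_mem, rfl⟩)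

theorem finset_inf_mem {ι : Type*} (s : Finset ι) (f : ι → D) (F : Pt D) :
    s.inf f ∈ F.carrier ↔ ∀ i ∈ s, f i ∈ F.carrier := by
  classical
  induction s using Finset.induction_on with
  | empty => simp [F.top_mem]
  | insert a s _ ih => simp [F.inf_mem, ih]

theorem finset_sup_mem {ι : Type*} (s : Finset ι) (f : ι → D) (F : Pt D) :
    s.sup f ∈ F.carrier ↔ ∃ i ∈ s, f i ∈ F.carrier := by
  classical
  induction s using Finset.induction_on with
  | empty => simp [F.bot_nmem]
  | insert a s _ ih => simp [F.sup_mem, ih]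

instance instFinitePt [Finite D] : Finite (Pt D) :=
  Finite.of_injective Pt.carrier (fun _ _ h => Pt.ext h)

end Basic

theorem himp_mem {H : Type*} [HeytingAlgebra H] (d e : H) (F : Pt H) :
    d ⇨ e ∈ F.carrier ↔ ∀ G : Pt H, F ≤ G → d ∈ G.carrier → e ∈ G.carrier :=
  rpc_mem (fun _ => le_himp_iff) F

end Pt

/-- Embeddings of bounded lattices which preserve a given implication. -/
structure ImpEmb {A D : Type*} [DistribLattice A] [BoundedOrder A] [DistribLattice D]
    [BoundedOrder D] (imp : A → A → A) (j : A → D) : Prop where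
  top : j ⊤ = ⊤
  bot : j ⊥ = ⊥
  inf : ∀ x y, j (x ⊓ y) = j x ⊓ j y
  sup : ∀ x y, j (x ⊔ y) = j x ⊔ j y
  adj : ∀ d x y, d ⊓ j x ≤ j y → d ≤ j (imp x y)
  mp : ∀ x y, imp x y ⊓ x ≤ y
  le : ∀ x y, j x ≤ j y → x ≤ y

namespace ImpEmb

variable {A D : Type*} [DistribLattice A] [BoundedOrder A] [DistribLattice D]
    [BoundedOrder D] {imp : A → A → A} {j : A → D}

/-- The map on points induced by an embedding. -/
def comap (hj : ImpEmb imp j) (F : Pt D) : Pt A where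
  carrier := {a | j a ∈ F.carrier}
  top_mem := by simp [hj.top, F.top_mem]
  bot_nmem := by simp [hj.bot, F.bot_nmem]
  inf_mem := by simp [hj.inf, F.inf_mem]
  sup_mem := by simp [hj.sup, F.sup_mem]

theorem mem_comap (hj : ImpEmb imp j) (F : Pt D) (a : A) :
    a ∈ (hj.comap F).carrier ↔ j a ∈ F.carrier := Iff.rfl

theorem comap_mono (hj : ImpEmb imp j) {F G : Pt D} (h : F ≤ G) : hj.comap F ≤ hj.comap G :=
  fun _ ha => h ha

theorem comap_back (hj : ImpEmb imp j) (F : Pt D) (G : Pt A) (h : hj.comap F ≤ G) :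
    ∃ F' : Pt D, F ≤ F' ∧ hj.comap F' = G := by
  obtain ⟨F', h1, h2⟩ := Pt.exists_pt {x | ∃ f ∈ F.carrier, ∃ g ∈ G.carrier, x = f ⊓ j g}
    {x | ∃ a, a ∉ G.carrier ∧ x = j a} ⟨_, ⊤, F.top_mem, ⊤, G.top_mem, rfl⟩
    ⟨_, ⊥, G.bot_nmem, rfl⟩
    (by
      rintro _ ⟨f, hf, g, hg, rfl⟩ _ ⟨f', hf', g', hg', rfl⟩
      refine ⟨f ⊓ f', (F.inf_mem _ _).2 ⟨hf, hf'⟩, g ⊓ g', (G.inf_mem _ _).2 ⟨hg, hg'⟩, ?_⟩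
      rw [hj.inf, inf_inf_inf_comm])
    (by
      rintro _ ⟨a, ha, rfl⟩ _ ⟨b, hb, rfl⟩
      refine ⟨a ⊔ b, ?_, (hj.sup a b).symm⟩
      rw [G.sup_mem]
      tauto)
    (by
      rintro _ ⟨f, hf, g, hg, rfl⟩ _ ⟨a, ha, rfl⟩ hle
      have h1 : imp g a ∈ G.carrier := h (F.mono (hj.adj _ _ _ hle) hf)
      exact ha (G.mono (hj.mp g a) ((G.inf_mem _ _).2 ⟨h1, hg⟩)))
  refine ⟨F', fun f hf => F'.mono inf_le_left (h1 ⟨f, hf, ⊤, G.top_mem, rfl⟩), ?_⟩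
  ext a
  rw [mem_comap]
  constructor
  · intro ha
    by_contra hn
    exact h2 _ ⟨a, hn, rfl⟩ ha
  · intro ha
    exact F'.mono inf_le_right (h1 ⟨⊤, F.top_mem, a, ha, rfl⟩)

theorem comap_surj (hj : ImpEmb imp j) (G : Pt A) : ∃ F : Pt D, hj.comap F = G := by
  obtain ⟨F', h1, h2⟩ := Pt.exists_pt {x | ∃ g ∈ G.carrier, x = j g}
    {x | ∃ a, a ∉ G.carrier ∧ x = j a} ⟨_, ⊤, G.top_mem, rfl⟩
    ⟨_, ⊥, G.bot_nmem, rfl⟩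
    (by
      rintro _ ⟨g, hg, rfl⟩ _ ⟨g', hg', rfl⟩
      exact ⟨g ⊓ g', (G.inf_mem _ _).2 ⟨hg, hg'⟩, (hj.inf _ _).symm⟩)
    (by
      rintro _ ⟨a, ha, rfl⟩ _ ⟨b, hb, rfl⟩
      refine ⟨a ⊔ b, ?_, (hj.sup a b).symm⟩
      rw [G.sup_mem]
      tauto)
    (by
      rintro _ ⟨g, hg, rfl⟩ _ ⟨a, ha, rfl⟩ hle
      exact ha (G.mono (hj.le _ _ hle) hg))
  refine ⟨F', ?_⟩
  ext a
  rw [mem_comap]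
  constructor
  · intro ha
    by_contra hn
    exact h2 _ ⟨a, hn, rfl⟩ ha
  · intro ha
    exact h1 ⟨a, ha, rfl⟩

end ImpEmb

/-! ### Definable p-morphisms from the points of `H` to finite posets -/

/-- Definable surjective p-morphisms from the points of `H` to a poset. Monotonicity follows
from `clop`. -/
structure Good {H Q : Type*} [HeytingAlgebra H] [PartialOrder Q] (h : Pt H → Q) : Prop where
  clop : ∀ q, ∃ a : H, ∀ F, a ∈ F.carrier ↔ ¬ h F ≤ q
  back : ∀ F v, h F ≤ v → ∃ G, F ≤ G ∧ h G = v
  surj : ∀ q, ∃ F, h F = q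

namespace Good

variable {H Q : Type*} [HeytingAlgebra H] [PartialOrder Q] {h : Pt H → Q}

theorem mono (hh : Good h) {F G : Pt H} (hFG : F ≤ G) : h F ≤ h G := by
  obtain ⟨a, ha⟩ := hh.clop (h G)
  by_contra hn
  exact (ha G).1 (hFG ((ha F).2 hn)) le_rfl

theorem upset [Finite Q] (hh : Good h) (U : Q → Prop) (hU : ∀ p q, p ≤ q → U p → U q) :
    ∃ a : H, ∀ F, a ∈ F.carrier ↔ U (h F) := by
  classical
  have := Fintype.ofFinite Q
  choose e he using hh.clop
  refine ⟨(Finset.univ.filter fun q => ¬ U q).inf e, fun F => ?_⟩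
  rw [Pt.finset_inf_mem]
  constructor
  · intro hF
    by_contra hn
    exact (he _ F).1 (hF (h F) (by simp [hn])) le_rfl
  · intro hUF q hq
    rw [he]
    intro hle
    exact (Finset.mem_filter.1 hq).2 (hU _ _ hle hUF)

end Good

/-! ### Collapsing a pair of points of a finite poset -/

/-- The underlying set of the collapse of the pair `x, y`: remove `x`. -/
@[ext] structure Coll {Q : Type*} (x : Q) where
  val : Q
  ne : val ≠ x

/-- The pairs of points that can be collapsed. -/
structure Collapsible {Q : Type*} [PartialOrder Q] (x y : Q) : Prop where
  nle : ¬ y ≤ x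
  up1 : ∀ z, z ≠ x → x ≤ z → y ≤ z
  up2 : ∀ z, z ≠ y → y ≤ z → x ≤ z

/-- The order of the collapse, where `y` represents the merged point. -/
@[reducible] def collOrder {Q : Type*} [PartialOrder Q] {x y : Q} (hxy : Collapsible x y) :
    PartialOrder (Coll x) where
  le u v := u.val ≤ v.val ∨ (v.val = y ∧ u.val ≤ x)
  le_refl u := Or.inl le_rfl
  le_trans u v w := by
    rintro (h1 | ⟨h1, h1'⟩) (h2 | ⟨h2, h2'⟩)
    · exact Or.inl (h1.trans h2)
    · exact Or.inr ⟨h2, h1.trans h2'⟩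
    · by_cases hw : w.val = y
      · exact Or.inr ⟨hw, h1'⟩
      · exact Or.inl (h1'.trans (hxy.up2 _ hw (h1 ▸ h2)))
    · exact Or.inr ⟨h2, h1'⟩
  le_antisymm u v := by
    rintro (h1 | ⟨h1, h1'⟩) (h2 | ⟨h2, h2'⟩)
    · exact Coll.ext (le_antisymm h1 h2)
    · exact absurd ((h2 ▸ h1).trans h2') hxy.nle
    · exact absurd ((h1 ▸ h2).trans h1') hxy.nle
    · exact absurd (h1 ▸ h2') hxy.nle

theorem dens_split {H : Type*} [HeytingAlgebra H] (hD : HasDensity H) (hS : HasSplitting H)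
    {m m' c : H} (h : StrongOrd m' m) (hm : m ≠ ⊤) (hc : m' ≤ c) :
    ∃ b : H, b ≠ ⊤ ∧ b ⇨ m = m ∧ m ≤ b ∧ c ⇨ b = b ∧ b ≤ c ∧ c ≤ b ⊔ m' := by
  obtain ⟨b₀, hb₀, h1, h2⟩ := hD m m' h hm
  obtain ⟨a₁, a₂, h3, h4, h5, h6, h7, h8, h9⟩ := hS b₀ c m' (by rwa [inf_eq_right.2 hc]) hb₀
  have hb₀a : b₀ ≤ a₁ := h5 ▸ le_himp
  refine ⟨a₁, h3, ?_, h2.2.trans hb₀a, ?_, h7, ?_⟩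
  · exact le_antisymm ((himp_le_himp_right hb₀a).trans h2.1.le) le_himp
  · refine le_antisymm ?_ le_himp
    rw [← h5, himp_left_comm]
    exact himp_le_himp_left ((himp_le_himp_right hc).trans h1.1.le)
  · exact (le_sup_left.trans h9.symm.le).trans (sup_le_sup_left h8 _)

section Step

variable {H : Type*} [HeytingAlgebra H] {Q : Type*} [PartialOrder Q] [Finite Q] {x y : Q}

instance instFiniteColl : Finite (Coll x) :=
  Finite.of_injective Coll.val (fun _ _ h => Coll.ext h)

open Classical in
/-- Lifting a map to the collapse, using an element `e` to split the fibre of `y` in a part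
above `s` and a part above `t`. -/
noncomputable def splitMap (f : Pt H → Coll x) (y s t : Q) (e : H) (F : Pt H) : Q :=
  if (f F).val = y then (if e ∈ F.carrier then s else t) else (f F).val

/-- Facts on the good map to the collapse. -/
theorem coll_facts (hxy : Collapsible x y) (f : Pt H → Coll x)
    (hf : @Good H (Coll x) _ (collOrder hxy) f) :
    (∀ F v, v ≠ x → v ≠ y → (f F).val ≤ v → ∃ G, F ≤ G ∧ (f G).val = v) ∧
    (∀ F, (f F).val ≤ y ∨ (f F).val ≤ x → ∃ G, F ≤ G ∧ (f G).val = y) ∧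
    (∀ q, q ≠ x → ∃ F, (f F).val = q) ∧
    (∀ q, q ≠ x → q ≠ y → ∃ a : H, ∀ F, a ∈ F.carrier ↔ ¬ (f F).val ≤ q) ∧
    (∀ U : Q → Prop, (∀ p q, p ≠ x → q ≠ x → p ≤ q → U p → U q) →
      (∀ p, p ≠ x → p ≤ x → U p → U y) →
      ∃ a : H, ∀ F, a ∈ F.carrier ↔ U (f F).val) := by
  let _ := collOrder hxy
  have hyx : y ≠ x := fun h => hxy.nle h.le
  refine ⟨?_, ?_, ?_, ?_, ?_⟩
  · intro F v hvx hvy hle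
    obtain ⟨G, h1, h2⟩ := hf.back F ⟨v, hvx⟩ (Or.inl hle)
    exact ⟨G, h1, by rw [h2]⟩
  · intro F h
    obtain ⟨G, h1, h2⟩ := hf.back F ⟨y, hyx⟩ (h.imp id (fun h => ⟨rfl, h⟩))
    exact ⟨G, h1, by rw [h2]⟩
  · intro q hq
    obtain ⟨F, hF⟩ := hf.surj ⟨q, hq⟩
    exact ⟨F, by rw [hF]⟩
  · intro q hqx hqy
    obtain ⟨a, ha⟩ := hf.clop ⟨q, hqx⟩
    refine ⟨a, fun F => (ha F).trans (not_congr ⟨?_, Or.inl⟩)⟩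
    rintro (h | ⟨h, -⟩)
    · exact h
    · exact absurd h hqy
  · intro U h1 h2
    refine hf.upset (fun q => U q.val) ?_
    rintro p q (h | ⟨h, h'⟩) hp
    · exact h1 _ _ p.ne q.ne h hp
    · exact h ▸ h2 _ p.ne h' hp

theorem step1 (hD : HasDensity H) (hS : HasSplitting H) (hxy : Collapsible x y) (hle : x ≤ y)
    (f : Pt H → Coll x) (hf : @Good H (Coll x) _ (collOrder hxy) f) :
    ∃ h : Pt H → Q, Good h ∧ ∀ F, h F = (f F).val ∨ (h F = x ∧ (f F).val = y) := by
  obtain ⟨back1, back2, surj, clop, up⟩ := coll_facts hxy f hf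
  have hyx : y ≠ x := fun h => hxy.nle h.le
  obtain ⟨m, hm⟩ := up (fun q => ¬ q ≤ y) (fun p q _ _ h1 h2 h3 => h2 (h1.trans h3))
    (fun p _ h1 h2 => absurd (h1.trans hle) h2)
  obtain ⟨m', hm'⟩ := up (fun q => q = y ∨ ¬ q ≤ y)
    (fun p q _ _ h1 h2 => by
      by_cases hq : q ≤ y
      · rcases h2 with rfl | h2
        · exact Or.inl (le_antisymm hq h1)
        · exact absurd (h1.trans hq) h2
      · exact Or.inr hq)
    (fun p _ h1 h2 => Or.inl rfl)
  obtain ⟨c, hc⟩ := up (fun q => ¬ q ≤ x) (fun p q _ _ h1 h2 h3 => h2 (h1.trans h3))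
    (fun p _ h1 h2 => absurd h1 h2)
  have hmm' : StrongOrd m' m := by
    refine ⟨le_antisymm ?_ le_himp, ?_⟩
    · rw [Pt.le_iff]
      intro F hF
      rw [Pt.himp_mem] at hF
      rw [hm]
      intro hFy
      obtain ⟨G, h1, h2⟩ := back2 F (Or.inl hFy)
      exact (hm G).1 (hF G h1 ((hm' G).2 (Or.inl h2))) h2.le
    · rw [Pt.le_iff]
      intro F hF
      exact (hm' F).2 (Or.inr ((hm F).1 hF))
  have hmtop : m ≠ ⊤ := by
    rintro rfl
    obtain ⟨F, hF⟩ := surj y hyx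
    exact (hm F).1 F.top_mem hF.le
  have hm'c : m' ≤ c := by
    rw [Pt.le_iff]
    intro F hF
    rw [hc]
    intro hx
    rcases (hm' F).1 hF with h | h
    · exact hxy.nle (h ▸ hx)
    · exact h (hx.trans hle)
  obtain ⟨b, hb, hbm, hmb, hcb, hbc, hcbm⟩ := dens_split hD hS hmm' hmtop hm'c
  have hy : ∀ F, (f F).val = y → b ∈ F.carrier → splitMap f y y x b F = y := by
    intro F h1 h2; simp [splitMap, h1, h2]
  have hx : ∀ F, (f F).val = y → b ∉ F.carrier → splitMap f y y x b F = x := by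
    intro F h1 h2; simp [splitMap, h1, h2]
  have hz : ∀ F, (f F).val ≠ y → splitMap f y y x b F = (f F).val := by
    intro F h1; simp [splitMap, h1]
  -- compare the order relations
  have hq : ∀ F q, q ≠ x → (splitMap f y y x b F ≤ q ↔ (f F).val ≤ q) := by
    intro F q hqx
    by_cases h1 : (f F).val = y
    · by_cases h2 : b ∈ F.carrier
      · rw [hy F h1 h2, h1]
      · rw [hx F h1 h2, h1]
        exact ⟨hxy.up1 q hqx, fun h => hle.trans h⟩
    · rw [hz F h1]
  have hqx : ∀ F, b ∈ F.carrier ↔ ¬ splitMap f y y x b F ≤ x := by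
    intro F
    by_cases h1 : (f F).val = y
    · by_cases h2 : b ∈ F.carrier
      · rw [hy F h1 h2]
        exact ⟨fun _ => hxy.nle, fun _ => h2⟩
      · rw [hx F h1 h2]
        exact ⟨fun h => absurd h h2, fun h => absurd le_rfl h⟩
    · rw [hz F h1]
      constructor
      · intro h
        exact (hc F).1 (F.mono hbc h)
      · intro h
        rcases (F.sup_mem _ _).1 (F.mono hcbm ((hc F).2 h)) with h2 | h2
        · exact h2
        · exact F.mono hmb ((hm F).2 (((hm' F).1 h2).resolve_left h1))
  have bx : ∀ F, b ∉ F.carrier → ∃ G, F ≤ G ∧ splitMap f y y x b G = x := by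
    intro F hF
    rw [← hcb, Pt.himp_mem] at hF
    push Not at hF
    obtain ⟨G, h1, h2, h3⟩ := hF
    refine ⟨G, h1, hx G ?_ h3⟩
    rcases (G.sup_mem _ _).1 (G.mono hcbm h2) with h4 | h4
    · exact absurd h4 h3
    · rcases (hm' G).1 h4 with h5 | h5
      · exact h5
      · exact absurd (G.mono hmb ((hm G).2 h5)) h3
  have byy : ∀ F, (f F).val ≤ y → ∃ G, F ≤ G ∧ splitMap f y y x b G = y := by
    intro F hF
    obtain ⟨G, h1, h2⟩ := back2 F (Or.inl hF)
    have h3 : m ∉ G.carrier := fun h => (hm G).1 h h2.le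
    rw [← hbm, Pt.himp_mem] at h3
    push Not at h3
    obtain ⟨G', h4, h5, h6⟩ := h3
    refine ⟨G', h1.trans h4, hy G' ?_ h5⟩
    have h7 := (hm' G').1 (h4 ((hm' G).2 (Or.inl h2)))
    rcases h7 with h7 | h7
    · exact h7
    · exact absurd ((hm G').2 h7) h6
  refine ⟨splitMap f y y x b, ⟨?_, ?_, ?_⟩, ?_⟩
  · intro q
    by_cases h1 : q = x
    · subst h1
      exact ⟨b, hqx⟩
    · by_cases h2 : q = y
      · subst h2
        exact ⟨m, fun F => (hm F).trans (not_congr (hq F _ h1).symm)⟩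
      · obtain ⟨a, ha⟩ := clop q h1 h2
        exact ⟨a, fun F => (ha F).trans (not_congr (hq F q h1).symm)⟩
  · intro F v hv
    by_cases h1 : v = x
    · subst h1
      exact bx F (fun h => (hqx F).1 h hv)
    · rw [hq F v h1] at hv
      by_cases h2 : v = y
      · subst h2
        exact byy F hv
      · obtain ⟨G, h3, h4⟩ := back1 F v h1 h2 hv
        exact ⟨G, h3, by rw [hz G (h4 ▸ h2), h4]⟩
  · intro q
    by_cases h1 : q = x
    · subst h1
      obtain ⟨F, hF⟩ := Pt.exists_nmem hb
      obtain ⟨G, -, hG⟩ := bx F hF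
      exact ⟨G, hG⟩
    · obtain ⟨F, hF⟩ := surj q h1
      by_cases h2 : q = y
      · subst h2
        obtain ⟨G, -, hG⟩ := byy F hF.le
        exact ⟨G, hG⟩
      · exact ⟨F, by rw [hz F (hF ▸ h2), hF]⟩
  · intro F
    by_cases h1 : (f F).val = y
    · by_cases h2 : b ∈ F.carrier
      · exact Or.inl (by rw [hy F h1 h2, h1])
      · exact Or.inr ⟨hx F h1 h2, h1⟩
    · exact Or.inl (hz F h1)

theorem step2 (hS : HasSplitting H) (hxy : Collapsible x y) (hnle : ¬ x ≤ y)
    (f : Pt H → Coll x) (hf : @Good H (Coll x) _ (collOrder hxy) f) :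
    ∃ h : Pt H → Q, Good h ∧ ∀ F, h F = (f F).val ∨ (h F = x ∧ (f F).val = y) := by
  obtain ⟨back1, back2, surj, clop, up⟩ := coll_facts hxy f hf
  have hyx : y ≠ x := fun h => hxy.nle h.le
  obtain ⟨m, hm⟩ := up (fun q => ¬ q ≤ y ∧ ¬ q ≤ x)
    (fun p q _ _ h1 h2 => ⟨fun h3 => h2.1 (h1.trans h3), fun h3 => h2.2 (h1.trans h3)⟩)
    (fun p _ h1 h2 => absurd h1 h2.2)
  obtain ⟨c₁, hc₁⟩ := up (fun q => q = y ∨ ¬ q ≤ y)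
    (fun p q _ _ h1 h2 => by
      by_cases hq : q ≤ y
      · rcases h2 with rfl | h2
        · exact Or.inl (le_antisymm hq h1)
        · exact absurd (h1.trans hq) h2
      · exact Or.inr hq)
    (fun p _ h1 h2 => Or.inl rfl)
  obtain ⟨c₂, hc₂⟩ := up (fun q => q = y ∨ ¬ q ≤ x)
    (fun p q _ _ h1 h2 => by
      refine Or.inr fun hq => ?_
      rcases h2 with rfl | h2
      · exact hxy.nle (h1.trans hq)
      · exact h2 (h1.trans hq))
    (fun p _ h1 h2 => Or.inl rfl)
  have hcm : StrongOrd (c₁ ⊓ c₂) m := by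
    refine ⟨le_antisymm ?_ le_himp, ?_⟩
    · rw [Pt.le_iff]
      intro F hF
      rw [Pt.himp_mem] at hF
      by_contra hn
      have hF2 : (f F).val ≤ y ∨ (f F).val ≤ x := by
        rw [hm] at hn
        tauto
      obtain ⟨G, h1, h2⟩ := back2 F hF2
      have := hF G h1 ((G.inf_mem _ _).2 ⟨(hc₁ G).2 (Or.inl h2), (hc₂ G).2 (Or.inl h2)⟩)
      exact ((hm G).1 this).1 h2.le
    · rw [Pt.le_iff]
      intro F hF
      have := (hm F).1 hF
      exact (F.inf_mem _ _).2 ⟨(hc₁ F).2 (Or.inr this.1), (hc₂ F).2 (Or.inr this.2)⟩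
  have hmtop : m ≠ ⊤ := by
    rintro rfl
    obtain ⟨F, hF⟩ := surj y hyx
    exact ((hm F).1 F.top_mem).1 hF.le
  obtain ⟨a₁, a₂, ha₁, ha₂, h21, h12, h1c, h2c, hsup⟩ := hS m c₁ c₂ hcm hmtop
  have hma₁ : m ≤ a₁ := h21 ▸ le_himp
  have hma₂ : m ≤ a₂ := h12 ▸ le_himp
  have hinf : ∀ F : Pt H, a₁ ∈ F.carrier → a₂ ∈ F.carrier → m ∈ F.carrier := by
    intro F h1 h2
    rw [← h21, Pt.himp_mem] at h1
    exact h1 F le_rfl h2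
  have hcov : ∀ F : Pt H, c₁ ∈ F.carrier ∨ c₂ ∈ F.carrier → a₁ ∈ F.carrier ∨ a₂ ∈ F.carrier := by
    intro F h
    rwa [← F.sup_mem, hsup, F.sup_mem]
  have hym : ∀ F, (f F).val = y → m ∉ F.carrier := fun F h h' => ((hm F).1 h').1 h.le
  have hx : ∀ F, (f F).val = y → a₁ ∈ F.carrier → splitMap f y x y a₁ F = x := by
    intro F h1 h2; simp [splitMap, h1, h2]
  have hy : ∀ F, (f F).val = y → a₁ ∉ F.carrier → splitMap f y x y a₁ F = y := by
    intro F h1 h2; simp [splitMap, h1, h2]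
  have hz : ∀ F, (f F).val ≠ y → splitMap f y x y a₁ F = (f F).val := by
    intro F h1; simp [splitMap, h1]
  have hq : ∀ F q, q ≠ x → q ≠ y → (splitMap f y x y a₁ F ≤ q ↔ (f F).val ≤ q) := by
    intro F q hqx hqy
    by_cases h1 : (f F).val = y
    · by_cases h2 : a₁ ∈ F.carrier
      · rw [hx F h1 h2, h1]
        exact ⟨hxy.up1 q hqx, hxy.up2 q hqy⟩
      · rw [hy F h1 h2, h1]
    · rw [hz F h1]
  have hmid : ∀ F, (f F).val ≠ y → c₁ ∈ F.carrier → c₂ ∈ F.carrier → m ∈ F.carrier := by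
    intro F h1 h2 h3
    exact (hm F).2 ⟨((hc₁ F).1 h2).resolve_left h1, ((hc₂ F).1 h3).resolve_left h1⟩
  have hqy : ∀ F, a₁ ∈ F.carrier ↔ ¬ splitMap f y x y a₁ F ≤ y := by
    intro F
    by_cases h1 : (f F).val = y
    · by_cases h2 : a₁ ∈ F.carrier
      · rw [hx F h1 h2]
        exact ⟨fun _ => hnle, fun _ => h2⟩
      · rw [hy F h1 h2]
        exact ⟨fun h => absurd h h2, fun h => absurd le_rfl h⟩
    · rw [hz F h1]
      constructor
      · intro h
        exact ((hc₁ F).1 (F.mono h1c h)).resolve_left h1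
      · intro h
        have h3 := (hc₁ F).2 (Or.inr h)
        rcases hcov F (Or.inl h3) with h2 | h2
        · exact h2
        · exact F.mono hma₁ (hmid F h1 h3 (F.mono h2c h2))
  have hqx : ∀ F, a₂ ∈ F.carrier ↔ ¬ splitMap f y x y a₁ F ≤ x := by
    intro F
    by_cases h1 : (f F).val = y
    · by_cases h2 : a₁ ∈ F.carrier
      · rw [hx F h1 h2]
        exact ⟨fun h => absurd (hinf F h2 h) (hym F h1), fun h => absurd le_rfl h⟩
      · rw [hy F h1 h2]
        exact ⟨fun _ => hxy.nle,
          fun _ => (hcov F (Or.inl ((hc₁ F).2 (Or.inl h1)))).resolve_left h2⟩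
    · rw [hz F h1]
      constructor
      · intro h
        exact ((hc₂ F).1 (F.mono h2c h)).resolve_left h1
      · intro h
        have h3 := (hc₂ F).2 (Or.inr h)
        rcases hcov F (Or.inr h3) with h2 | h2
        · exact F.mono hma₂ (hmid F h1 (F.mono h1c h2) h3)
        · exact h2
  have hup : ∀ G : Pt H, m ∉ G.carrier → ∃ G', G ≤ G' ∧ (f G').val = y := by
    intro G h
    apply back2
    rw [hm] at h
    tauto
  have byy : ∀ F, a₁ ∉ F.carrier → ∃ G, F ≤ G ∧ splitMap f y x y a₁ G = y := by
    intro F hF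
    rw [← h21, Pt.himp_mem] at hF
    push Not at hF
    obtain ⟨G, h1, h2, h3⟩ := hF
    obtain ⟨G', h4, h5⟩ := hup G h3
    exact ⟨G', h1.trans h4, hy G' h5 (fun h => hym G' h5 (hinf G' h (h4 h2)))⟩
  have bx : ∀ F, a₂ ∉ F.carrier → ∃ G, F ≤ G ∧ splitMap f y x y a₁ G = x := by
    intro F hF
    rw [← h12, Pt.himp_mem] at hF
    push Not at hF
    obtain ⟨G, h1, h2, h3⟩ := hF
    obtain ⟨G', h4, h5⟩ := hup G h3
    exact ⟨G', h1.trans h4, hx G' h5 (h4 h2)⟩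
  refine ⟨splitMap f y x y a₁, ⟨?_, ?_, ?_⟩, ?_⟩
  · intro q
    by_cases h1 : q = x
    · subst h1
      exact ⟨a₂, hqx⟩
    · by_cases h2 : q = y
      · subst h2
        exact ⟨a₁, hqy⟩
      · obtain ⟨a, ha⟩ := clop q h1 h2
        exact ⟨a, fun F => (ha F).trans (not_congr (hq F q h1 h2).symm)⟩
  · intro F v hv
    by_cases h1 : v = x
    · subst h1
      exact bx F (fun h => (hqx F).1 h hv)
    · by_cases h2 : v = y
      · subst h2
        exact byy F (fun h => (hqy F).1 h hv)
      · rw [hq F v h1 h2] at hv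
        obtain ⟨G, h3, h4⟩ := back1 F v h1 h2 hv
        exact ⟨G, h3, by rw [hz G (h4 ▸ h2), h4]⟩
  · intro q
    by_cases h1 : q = x
    · subst h1
      obtain ⟨F, hF⟩ := Pt.exists_nmem ha₂
      obtain ⟨G, -, hG⟩ := bx F hF
      exact ⟨G, hG⟩
    · by_cases h2 : q = y
      · subst h2
        obtain ⟨F, hF⟩ := Pt.exists_nmem ha₁
        obtain ⟨G, -, hG⟩ := byy F hF
        exact ⟨G, hG⟩
      · obtain ⟨F, hF⟩ := surj q h1
        exact ⟨F, by rw [hz F (hF ▸ h2), hF]⟩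
  · intro F
    by_cases h1 : (f F).val = y
    · by_cases h2 : a₁ ∈ F.carrier
      · exact Or.inr ⟨hx F h1 h2, h1⟩
      · exact Or.inl (by rw [hy F h1 h2, h1])
    · exact Or.inl (hz F h1)

end Step

/-- A non-injective surjective p-morphism of finite posets identifies a collapsible pair. -/
theorem exists_collapsible {Q P : Type*} [PartialOrder Q] [Finite Q] [PartialOrder P]
    (π : Q → P) (mono : ∀ u v, u ≤ v → π u ≤ π v)
    (back : ∀ u w, π u ≤ w → ∃ v, u ≤ v ∧ π v = w)
    (hinj : ¬ Function.Injective π) : ∃ x y, Collapsible x y ∧ π x = π y := by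
  have hT : {p : P | ∃ q q', q ≠ q' ∧ π q = p ∧ π q' = p}.Finite := by
    refine (Set.finite_range π).subset ?_
    rintro p ⟨q, q', -, h, -⟩
    exact ⟨q, h⟩
  have hTne : {p : P | ∃ q q', q ≠ q' ∧ π q = p ∧ π q' = p}.Nonempty := by
    simp only [Function.Injective] at hinj
    push Not at hinj
    obtain ⟨q, q', h1, h2⟩ := hinj
    exact ⟨π q', q, q', h2, h1, rfl⟩
  obtain ⟨p, ⟨q, q', hqq, hq, hq'⟩, hpmax⟩ := hT.exists_maximal hTne
  obtain ⟨y, hy, hymax⟩ := (Set.toFinite {z | π z = p}).exists_maximal ⟨q, hq⟩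
  have hne : {z | π z = p ∧ z ≠ y}.Nonempty := by
    by_cases h : q = y
    · exact ⟨q', hq', fun h' => hqq (h.trans h'.symm)⟩
    · exact ⟨q, hq, h⟩
  obtain ⟨x, ⟨hx, hxy⟩, hxmax⟩ := (Set.toFinite {z | π z = p ∧ z ≠ y}).exists_maximal hne
  have hy : π y = p := hy
  have key : ∀ u v z, π u = p → π v = p → u ≤ z → π z ≠ p → v ≤ z := by
    intro u v z hu hv huz hz
    obtain ⟨w, h1, h2⟩ := back v (π z) (by rw [hv, ← hu]; exact mono _ _ huz)
    by_cases hwz : w = z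
    · exact hwz ▸ h1
    · have hpz : p ≤ π z := hu ▸ mono _ _ huz
      exact absurd (le_antisymm (hpmax ⟨w, z, hwz, h2, rfl⟩ hpz) hpz) hz
  refine ⟨x, y, ⟨?_, ?_, ?_⟩, hx.trans hy.symm⟩
  · intro h
    exact hxy (le_antisymm (hymax hx h) h)
  · intro z hzx hxz
    by_cases hz : π z = p
    · by_cases hzy : z = y
      · exact hzy.ge
      · exact absurd (le_antisymm (hxmax ⟨hz, hzy⟩ hxz) hxz) hzx
    · exact key x y z hx hy hxz hz
  · intro z hzy hyz
    by_cases hz : π z = p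
    · exact absurd (le_antisymm (hymax hz hyz) hyz) hzy
    · exact key y x z hy hx hyz hz

/-- The lifting theorem. -/
theorem lift_good {H : Type*} [HeytingAlgebra H] (hD : HasDensity H) (hS : HasSplitting H)
    {P : Type*} [PartialOrder P] (f : Pt H → P) (hf : Good f) (n : ℕ) :
    ∀ (Q : Type*) [PartialOrder Q] [Finite Q] (π : Q → P), Nat.card Q = n →
    (∀ u v, u ≤ v → π u ≤ π v) → (∀ u w, π u ≤ w → ∃ v, u ≤ v ∧ π v = w) →
    (∀ p, ∃ q, π q = p) → ∃ h : Pt H → Q, Good h ∧ ∀ F, π (h F) = f F := by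
  induction n with
  | zero =>
    intro Q _ _ π hn mono back surj
    have : IsEmpty Q := (Nat.card_eq_zero.1 hn).resolve_right (fun h => not_finite Q)
    have hP : ∀ F : Pt H, False := fun F => by
      obtain ⟨q, -⟩ := surj (f F)
      exact this.false q
    exact ⟨fun F => (hP F).elim, ⟨fun q => isEmptyElim q, fun F => (hP F).elim,
      fun q => isEmptyElim q⟩, fun F => (hP F).elim⟩
  | succ n ih =>
    intro Q _ _ π hn mono back surj
    by_cases hinj : Function.Injective π
    · choose g hg using surj
      have hle : ∀ p q, g p ≤ q ↔ p ≤ π q := by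
        intro p q
        constructor
        · intro h
          rw [← hg p]
          exact mono _ _ h
        · intro h
          obtain ⟨v, h1, h2⟩ := back (g p) (π q) (by rwa [hg])
          exact hinj h2 ▸ h1
      refine ⟨fun F => g (f F), ⟨?_, ?_, ?_⟩, fun F => hg _⟩
      · intro q
        obtain ⟨a, ha⟩ := hf.clop (π q)
        exact ⟨a, fun F => (ha F).trans (not_congr (hle _ _).symm)⟩
      · intro F v hv
        obtain ⟨G, h1, h2⟩ := hf.back F (π v) ((hle _ _).1 hv)
        exact ⟨G, h1, hinj (by rw [hg, h2])⟩
      · intro q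
        obtain ⟨F, hF⟩ := hf.surj (π q)
        exact ⟨F, hinj (by rw [hg, hF])⟩
    · obtain ⟨x, y, hxy, hπ⟩ := exists_collapsible π mono back hinj
      have hyx : y ≠ x := fun h => hxy.nle h.le
      have hcard : Nat.card (Coll x) = n := by
        have e : Coll x ≃ {q : Q // q ≠ x} :=
          ⟨fun c => ⟨c.val, c.ne⟩, fun c => ⟨c.1, c.2⟩, fun _ => rfl, fun _ => rfl⟩
        classical
        have := Fintype.ofFinite Q
        rw [Nat.card_congr e, Nat.card_eq_fintype_card, Fintype.card_subtype_compl,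
          Fintype.card_subtype_eq, ← Nat.card_eq_fintype_card, hn]
        rfl
      obtain ⟨f', hf', hf'π⟩ := @ih (Coll x) (collOrder hxy) _ (fun q => π q.val) hcard
        (by
          rintro u v (h | ⟨h, h'⟩)
          · exact mono _ _ h
          · rw [h, ← hπ]
            exact mono _ _ h')
        (by
          intro u w h
          obtain ⟨v, h1, h2⟩ := back _ _ h
          by_cases hv : v = x
          · exact ⟨⟨y, hyx⟩, Or.inr ⟨rfl, hv ▸ h1⟩, by rw [← hπ, ← hv, h2]⟩
          · exact ⟨⟨v, hv⟩, Or.inl h1, h2⟩)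
        (by
          intro p
          obtain ⟨q, hq⟩ := surj p
          by_cases hqx : q = x
          · exact ⟨⟨y, hyx⟩, by rw [← hπ, ← hqx, hq]⟩
          · exact ⟨⟨q, hqx⟩, hq⟩)
      have : ∃ h : Pt H → Q, Good h ∧ ∀ F, h F = (f' F).val ∨ (h F = x ∧ (f' F).val = y) := by
        by_cases hle : x ≤ y
        · exact step1 hD hS hxy hle f' hf'
        · exact step2 hS hxy hle f' hf'
      obtain ⟨h, hh, hhf⟩ := this
      refine ⟨h, hh, fun F => ?_⟩
      rw [← hf'π F]
      rcases hhf F with h1 | ⟨h1, h2⟩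
      · rw [h1]
      · rw [h1, h2, hπ]

/-! ### Embedding finite extensions -/

theorem embed_core {A D H : Type*} [DistribLattice A] [BoundedOrder A] [Finite A]
    [DistribLattice D] [BoundedOrder D] [Finite D] [HeytingAlgebra H]
    (hD : HasDensity H) (hS : HasSplitting H) {imp : A → A → A} {i : A → H} {j : A → D}
    (hi : ImpEmb imp i) (hj : ImpEmb imp j) :
    ∃ φ : D → H, φ ⊤ = ⊤ ∧ φ ⊥ = ⊥ ∧ (∀ d e, φ (d ⊓ e) = φ d ⊓ φ e) ∧
      (∀ d e, φ (d ⊔ e) = φ d ⊔ φ e) ∧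
      (∀ d e r, (∀ x, x ≤ r ↔ x ⊓ d ≤ e) → φ r = φ d ⇨ φ e) ∧
      (∀ a, φ (j a) = i a) ∧ ∀ d, φ d = ⊤ → d = ⊤ := by
  classical
  have := Fintype.ofFinite A
  have hgood : Good hi.comap := by
    refine ⟨?_, hi.comap_back, hi.comap_surj⟩
    intro G
    refine ⟨i ((Finset.univ.filter fun a => a ∉ G.carrier).sup id), fun F => ?_⟩
    rw [← hi.mem_comap, Pt.finset_sup_mem, Pt.le_def]
    push Not
    simp only [Finset.mem_filter, Finset.mem_univ, true_and, id]
    exact exists_congr fun a => and_comm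
  obtain ⟨h, hh, hπ⟩ := lift_good hD hS hi.comap hgood _ (Pt D) hj.comap rfl
    (fun u v huv => hj.comap_mono huv) hj.comap_back hj.comap_surj
  have hex : ∀ d : D, ∃ e : H, ∀ F, e ∈ F.carrier ↔ d ∈ (h F).carrier := fun d =>
    hh.upset (fun q => d ∈ q.carrier) (fun p q hpq hp => hpq hp)
  choose φ hφ using hex
  refine ⟨φ, ?_, ?_, ?_, ?_, ?_, ?_, ?_⟩
  · refine Pt.eq_of fun F => ?_
    rw [hφ]
    exact ⟨fun _ => F.top_mem, fun _ => (h F).top_mem⟩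
  · refine Pt.eq_of fun F => ?_
    rw [hφ]
    exact ⟨fun h' => absurd h' (h F).bot_nmem, fun h' => absurd h' F.bot_nmem⟩
  · intro d e
    refine Pt.eq_of fun F => ?_
    rw [hφ, F.inf_mem, hφ, hφ, (h F).inf_mem]
  · intro d e
    refine Pt.eq_of fun F => ?_
    rw [hφ, F.sup_mem, hφ, hφ, (h F).sup_mem]
  · intro d e r hr
    refine Pt.eq_of fun F => ?_
    rw [hφ, Pt.himp_mem, Pt.rpc_mem hr]
    constructor
    · intro h1 G hFG
      rw [hφ, hφ]
      exact h1 _ (hh.mono hFG)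
    · intro h1 G hFG
      obtain ⟨G', h2, rfl⟩ := hh.back F G hFG
      rw [← hφ, ← hφ]
      exact h1 G' h2
  · intro a
    refine Pt.eq_of fun F => ?_
    rw [hφ, ← hj.mem_comap, hπ, hi.mem_comap]
  · intro d hd
    by_contra hn
    obtain ⟨G, hG⟩ := Pt.exists_nmem hn
    obtain ⟨F, rfl⟩ := hh.surj G
    rw [← hφ, hd] at hG
    exact hG F.top_mem

/-- The values of all subterms of a term. -/
def HeytingTerm.subvals {n : ℕ} {K : Type*} [HeytingAlgebra K] (v : Fin n → K) :
    HeytingTerm n → Set K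
  | .var i => {v i}
  | .bot => {⊥}
  | .top => {⊤}
  | .inf a b => insert (a.eval v ⊓ b.eval v) (a.subvals v ∪ b.subvals v)
  | .sup a b => insert (a.eval v ⊔ b.eval v) (a.subvals v ∪ b.subvals v)
  | .himp a b => insert (a.eval v ⇨ b.eval v) (a.subvals v ∪ b.subvals v)

theorem HeytingTerm.subvals_finite {n : ℕ} {K : Type*} [HeytingAlgebra K] (v : Fin n → K)
    (t : HeytingTerm n) : (t.subvals v).Finite := by
  induction t with
  | var i => exact Set.finite_singleton _
  | bot => exact Set.finite_singleton _
  | top => exact Set.finite_singleton _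
  | inf a b iha ihb => exact (iha.union ihb).insert _
  | sup a b iha ihb => exact (iha.union ihb).insert _
  | himp a b iha ihb => exact (iha.union ihb).insert _

theorem HeytingTerm.eval_mem_subvals {n : ℕ} {K : Type*} [HeytingAlgebra K] (v : Fin n → K)
    (t : HeytingTerm n) : t.eval v ∈ t.subvals v := by
  cases t with
  | var i => exact rfl
  | bot => exact rfl
  | top => exact rfl
  | inf a b => exact Set.mem_insert _ _
  | sup a b => exact Set.mem_insert _ _
  | himp a b => exact Set.mem_insert _ _

theorem eval_transfer {n : ℕ} {K H : Type*} [HeytingAlgebra K] [HeytingAlgebra H]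
    (L : Sublattice K) (hbot : ⊥ ∈ L) (htop : ⊤ ∈ L) (φ : L → H)
    (h1 : φ ⟨⊤, htop⟩ = ⊤) (h0 : φ ⟨⊥, hbot⟩ = ⊥) (hinf : ∀ d e, φ (d ⊓ e) = φ d ⊓ φ e)
    (hsup : ∀ d e, φ (d ⊔ e) = φ d ⊔ φ e)
    (himp : ∀ d e r, (∀ x, x ≤ r ↔ x ⊓ d ≤ e) → φ r = φ d ⇨ φ e)
    (v : Fin n → K) (w : Fin n → H) (hvw : ∀ i (hi : v i ∈ L), φ ⟨v i, hi⟩ = w i)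
    (t : HeytingTerm n) (ht : t.subvals v ⊆ L) (he : t.eval v ∈ L) :
    φ ⟨t.eval v, he⟩ = t.eval w := by
  induction t with
  | var i => exact hvw i he
  | bot => exact h0
  | top => exact h1
  | inf a b iha ihb =>
    have hsa : a.subvals v ⊆ L := fun x hx => ht (Or.inr (Or.inl hx))
    have hsb : b.subvals v ⊆ L := fun x hx => ht (Or.inr (Or.inr hx))
    have e1 := iha hsa (hsa (a.eval_mem_subvals v))
    have e2 := ihb hsb (hsb (b.eval_mem_subvals v))
    simp only [HeytingTerm.eval]
    rw [← e1, ← e2, ← hinf]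
    rfl
  | sup a b iha ihb =>
    have hsa : a.subvals v ⊆ L := fun x hx => ht (Or.inr (Or.inl hx))
    have hsb : b.subvals v ⊆ L := fun x hx => ht (Or.inr (Or.inr hx))
    have e1 := iha hsa (hsa (a.eval_mem_subvals v))
    have e2 := ihb hsb (hsb (b.eval_mem_subvals v))
    simp only [HeytingTerm.eval]
    rw [← e1, ← e2, ← hsup]
    rfl
  | himp a b iha ihb =>
    have hsa : a.subvals v ⊆ L := fun x hx => ht (Or.inr (Or.inl hx))
    have hsb : b.subvals v ⊆ L := fun x hx => ht (Or.inr (Or.inr hx))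
    have e1 := iha hsa (hsa (a.eval_mem_subvals v))
    have e2 := ihb hsb (hsb (b.eval_mem_subvals v))
    simp only [HeytingTerm.eval]
    rw [← e1, ← e2]
    apply himp
    intro x
    exact le_himp_iff (a := x.1)

theorem extClosed_of {H : Type*} [HeytingAlgebra H] (hlf : LocallyFiniteHA H)
    (hD : HasDensity H) (hS : HasSplitting H) : IsExtClosed H := by
  classical
  intro K _ f hinj l m κ t s a ⟨b, hb⟩
  obtain ⟨S, hSfin, hSa⟩ := hlf (Finset.univ.image a)
  let LA : Sublattice H := ⟨S.carrier, fun _ hx _ hy => S.sup_mem hx hy,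
    fun _ hx _ hy => S.inf_mem hx hy⟩
  let v : Fin (l + m) → K := Fin.append (fun i => f (a i)) b
  let C : Set K := f '' S.carrier ∪ (Set.range b ∪ (t.subvals v ∪ ⋃ k, (s k).subvals v))
  have hCfin : C.Finite := (hSfin.image _).union ((Set.finite_range b).union
    ((t.subvals_finite v).union (Set.finite_iUnion fun k => (s k).subvals_finite v)))
  let LD : Sublattice K := ⟨latticeClosure C, isSublattice_latticeClosure.supClosed,
    isSublattice_latticeClosure.infClosed⟩
  have hCD : ∀ x ∈ C, x ∈ LD := fun x hx => subset_latticeClosure hx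
  have hfS : ∀ x ∈ S.carrier, f x ∈ LD := fun x hx => hCD _ (Or.inl ⟨x, hx, rfl⟩)
  have hbot : (⊥ : K) ∈ LD := by
    have := hfS ⊥ S.bot_mem
    rwa [map_bot] at this
  have htop : (⊤ : K) ∈ LD := by
    have := hfS ⊤ S.top_mem
    rwa [map_top] at this
  letI iA : BoundedOrder LA :=
    { top := ⟨⊤, S.top_mem⟩, bot := ⟨⊥, S.bot_mem⟩
      le_top := fun x => show x.1 ≤ ⊤ from le_top
      bot_le := fun x => show ⊥ ≤ x.1 from bot_le }
  letI iD : BoundedOrder LD :=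
    { top := ⟨⊤, htop⟩, bot := ⟨⊥, hbot⟩
      le_top := fun x => show x.1 ≤ ⊤ from le_top
      bot_le := fun x => show ⊥ ≤ x.1 from bot_le }
  have fA : Finite LA := hSfin.to_subtype
  have fD : Finite LD := hCfin.latticeClosure.to_subtype
  have hfle : ∀ x y, f x ≤ f y → x ≤ y := by
    intro x y h
    rw [← inf_eq_left] at h ⊢
    rw [← map_inf] at h
    exact hinj h
  let imp : LA → LA → LA := fun x y => ⟨x.1 ⇨ y.1, S.himp_mem x.2 y.2⟩
  have hmp : ∀ x y : LA, imp x y ⊓ x ≤ y := fun x y => show (x.1 ⇨ y.1) ⊓ x.1 ≤ y.1 from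
    himp_inf_le
  have hi : ImpEmb imp (fun x : LA => x.1) :=
    { top := rfl, bot := rfl, inf := fun _ _ => rfl, sup := fun _ _ => rfl
      adj := fun d x y h => le_himp_iff.2 h
      mp := hmp
      le := fun x y h => h }
  have hj : ImpEmb imp (fun x : LA => (⟨f x.1, hfS _ x.2⟩ : LD)) :=
    { top := Subtype.ext (map_top f)
      bot := Subtype.ext (map_bot f)
      inf := fun x y => Subtype.ext (map_inf f x.1 y.1)
      sup := fun x y => Subtype.ext (map_sup f x.1 y.1)
      adj := fun d x y h => by
        change d.1 ≤ f (x.1 ⇨ y.1)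
        rw [map_himp]
        exact le_himp_iff.2 h
      mp := hmp
      le := fun x y h => hfle _ _ h }
  obtain ⟨φ, p1, p0, pinf, psup, pimp, pj, ptop⟩ := embed_core hD hS hi hj
  have hbD : ∀ i, b i ∈ LD := fun i => hCD _ (Or.inr (Or.inl ⟨i, rfl⟩))
  have hvw : ∀ i (hi : v i ∈ LD), φ ⟨v i, hi⟩ =
      (Fin.append a (fun i => φ ⟨b i, hbD i⟩) : Fin (l + m) → H) i := by
    intro i
    refine Fin.addCases (fun i => ?_) (fun i => ?_) i
    · intro hi
      have haS : a i ∈ S.carrier := hSa (by simp)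
      rw [Fin.append_left]
      refine Eq.trans ?_ (pj ⟨a i, haS⟩)
      congr 1
      exact Subtype.ext (by simp [v])
    · intro hi
      rw [Fin.append_right]
      congr 1
      exact Subtype.ext (by simp [v])
  have key := eval_transfer LD hbot htop φ p1 p0 pinf psup pimp v _ hvw
  refine ⟨fun i => φ ⟨b i, hbD i⟩, ?_, ?_⟩
  · have hsub : t.subvals v ⊆ LD := fun x hx => hCD _ (Or.inr (Or.inr (Or.inl hx)))
    rw [← key t hsub (hsub (t.eval_mem_subvals v)), ← p1]
    congr 1
    exact Subtype.ext hb.1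
  · intro k hk
    have hsub : (s k).subvals v ⊆ LD := fun x hx =>
      hCD _ (Or.inr (Or.inr (Or.inr (Set.mem_iUnion.2 ⟨k, hx⟩))))
    rw [← key (s k) hsub (hsub ((s k).eval_mem_subvals v))] at hk
    exact hb.2 k (congrArg Subtype.val (ptop _ hk))

/-! ### Existentially closed algebras have Density and Splitting -/

/-- A Kripke-style representation of `H` in an arbitrary universe. -/
structure KRepr {X H : Type*} [HeytingAlgebra H] (mem : X → H → Prop) : Prop where
  top : ∀ F, mem F ⊤
  bot : ∀ F, ¬ mem F ⊥
  inf : ∀ F a b, mem F (a ⊓ b) ↔ mem F a ∧ mem F b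
  sup : ∀ F a b, mem F (a ⊔ b) ↔ mem F a ∨ mem F b
  himp : ∀ F a b, mem F (a ⇨ b) ↔ ∀ G, (∀ c, mem F c → mem G c) → mem G a → mem G b
  le : ∀ a b, (∀ F, mem F a → mem F b) → a ≤ b

theorem exists_repr.{u, v} (H : Type u) [HeytingAlgebra H] [Countable H] :
    ∃ (X : Type v) (mem : X → H → Prop), KRepr mem := by
  have : Small.{v} H := Countable.toSmall H
  have : Small.{v} (Pt H) :=
    small_of_injective (f := Pt.carrier) (fun _ _ h => Pt.ext h)
  refine ⟨Shrink.{v} (Pt H), fun F a => a ∈ ((equivShrink (Pt H)).symm F).carrier,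
    ⟨fun F => Pt.top_mem _, fun F => Pt.bot_nmem _, fun F => Pt.inf_mem _,
      fun F => Pt.sup_mem _, ?_, ?_⟩⟩
  · intro F a b
    rw [Pt.himp_mem]
    constructor
    · intro h G hG
      exact h _ hG
    · intro h G hG
      have := h (equivShrink _ G)
      simp only [Equiv.symm_apply_apply] at this
      exact this hG
  · intro a b h
    rw [Pt.le_iff]
    intro F
    have := h (equivShrink _ F)
    simpa only [Equiv.symm_apply_apply] using this

theorem LowerSet.mem_himp_iff' {Y : Type*} [Preorder Y] (A B : LowerSet Y) (y : Y) :
    y ∈ A ⇨ B ↔ ∀ z, z ≤ y → z ∈ A → z ∈ B := by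
  rw [← LowerSet.Iic_le, le_himp_iff]
  exact ⟨fun h z hz hA => h ⟨hz, hA⟩, fun h z hz => h z hz.1 hz.2⟩

/-- The extension of `H` given by a p-morphism onto a representation (orders are reversed). -/
theorem exists_ext {X H : Type*} [HeytingAlgebra H] {mem : X → H → Prop} (hr : KRepr mem)
    {Y : Type*} [Preorder Y] (p : Y → X) (hmono : ∀ y z, z ≤ y → ∀ c, mem (p y) c → mem (p z) c)
    (hback : ∀ y G, (∀ c, mem (p y) c → mem G c) → ∃ z, z ≤ y ∧ p z = G)
    (hsurj : ∀ G, ∃ y, p y = G) :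
    ∃ f : HeytingHom H (LowerSet Y), Function.Injective f ∧
      ∀ a y, y ∈ f a ↔ mem (p y) a := by
  let g : H → LowerSet Y := fun a => ⟨{y | mem (p y) a}, fun y z hzy hy => hmono y z hzy a hy⟩
  have hg : ∀ a y, y ∈ g a ↔ mem (p y) a := fun a y => Iff.rfl
  refine ⟨{ toFun := g, map_sup' := ?_, map_inf' := ?_, map_bot' := ?_, map_himp' := ?_ }, ?_, hg⟩
  · intro a b
    ext y
    change y ∈ g (a ⊔ b) ↔ y ∈ g a ⊔ g b
    rw [LowerSet.mem_sup_iff, hg, hg, hg, hr.sup]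
  · intro a b
    ext y
    change y ∈ g (a ⊓ b) ↔ y ∈ g a ⊓ g b
    rw [LowerSet.mem_inf_iff, hg, hg, hg, hr.inf]
  · ext y
    change y ∈ g ⊥ ↔ y ∈ (⊥ : LowerSet Y)
    rw [hg]
    exact ⟨fun h => (hr.bot _ h).elim, fun h => h.elim⟩
  · intro a b
    ext y
    change y ∈ g (a ⇨ b) ↔ y ∈ g a ⇨ g b
    rw [LowerSet.mem_himp_iff', hg, hr.himp]
    constructor
    · intro h z hz
      exact h _ (hmono y z hz)
    · intro h G hG
      obtain ⟨z, hz, rfl⟩ := hback y G hG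
      exact h z hz
  · have hle : ∀ a b, g a = g b → a ≤ b := by
      intro a b hab
      apply hr.le
      intro F hF
      obtain ⟨y, rfl⟩ := hsurj F
      rw [← hg] at hF ⊢
      rwa [← hab]
    intro a b hab
    exact le_antisymm (hle a b hab) (hle b a hab.symm)

section Converse

variable {X H : Type*} [HeytingAlgebra H]

/-- The poset used for Density. -/
structure DensY (mem : X → H → Prop) (c : H) where
  pt : X
  up : Prop
  ok : up → mem pt c

/-- The (reversed) order on `DensY`. -/
instance instPreorderDensY (mem : X → H → Prop) (c : H) : Preorder (DensY mem c) where
  le z y := (∀ d, mem y.pt d → mem z.pt d) ∧ (y.up → z.up)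
  le_refl y := ⟨fun _ h => h, id⟩
  le_trans x y z h1 h2 := ⟨fun d h => h1.1 d (h2.1 d h), fun h => h1.2 (h2.2 h)⟩

/-- The poset used for Splitting. Here `l`, `r` are the flags of the two copies. -/
structure SplitY (mem : X → H → Prop) (b₁ b₂ : H) where
  pt : X
  l : Prop
  r : Prop
  nlr : ¬ (l ∧ r)
  okl : l → mem pt b₁
  okr : r → mem pt b₂
  ok0 : mem pt b₁ ∨ mem pt b₂ → l ∨ r

/-- The (reversed) preorder on `SplitY`. -/
@[reducible] def splitOrder {mem : X → H → Prop} {a b₁ b₂ : H} : Preorder (SplitY mem b₁ b₂) where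
  le z y := (∀ d, mem y.pt d → mem z.pt d) ∧ (mem z.pt a ∨ ((y.l → z.l) ∧ (y.r → z.r)))
  le_refl y := ⟨fun _ h => h, Or.inr ⟨id, id⟩⟩
  le_trans x y z h1 h2 := by
    refine ⟨fun d h => h1.1 d (h2.1 d h), ?_⟩
    rcases h1.2 with h | h
    · exact Or.inl h
    · rcases h2.2 with h' | h'
      · exact Or.inl (h1.1 _ h')
      · exact Or.inr ⟨fun k => h.1 (h'.1 k), fun k => h.2 (h'.2 k)⟩

end Converse

theorem himp_strong {X H : Type*} [HeytingAlgebra H] {mem : X → H → Prop} (hr : KRepr mem)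
    {c a : H} (h : StrongOrd c a) (F : X) (hF : ¬ mem F a) :
    ∃ G, (∀ d, mem F d → mem G d) ∧ mem G c ∧ ¬ mem G a := by
  rw [← h.1, hr.himp] at hF
  push Not at hF
  exact hF

theorem repr_mono {X H : Type*} [HeytingAlgebra H] {mem : X → H → Prop} (hr : KRepr mem)
    {a b : H} (h : a ≤ b) (F : X) (hF : mem F a) : mem F b := by
  rw [← inf_eq_left.2 h, hr.inf] at hF
  exact hF.2

theorem repr_top {X H : Type*} [HeytingAlgebra H] {mem : X → H → Prop} (hr : KRepr mem)
    {a : H} (h : a ≠ ⊤) : ∃ F, ¬ mem F a := by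
  by_contra hn
  push Not at hn
  exact h (top_le_iff.1 (hr.le _ _ fun F _ => hn F))

/-- The term expressing equality. -/
def HeytingTerm.eqv {n : ℕ} (a b : HeytingTerm n) : HeytingTerm n :=
  .inf (.himp a b) (.himp b a)

theorem HeytingTerm.eval_eqv {n : ℕ} {H : Type*} [HeytingAlgebra H] (v : Fin n → H)
    (a b : HeytingTerm n) : (a.eqv b).eval v = ⊤ ↔ a.eval v = b.eval v := by
  simp only [HeytingTerm.eqv, HeytingTerm.eval, inf_eq_top_iff, himp_eq_top_iff]
  exact ⟨fun h => le_antisymm h.1 h.2, fun h => ⟨h.le, h.ge⟩⟩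

theorem density_of.{u, v} {H : Type u} [HeytingAlgebra H] [Countable H]
    (hE : IsExtClosed.{u, v} H) : HasDensity H := by
  intro a c hca ha
  obtain ⟨X, mem, hr⟩ := exists_repr.{u, v} H
  obtain ⟨f, hinj, hf⟩ := exists_ext hr (Y := DensY mem c) (fun y => y.pt)
    (fun y z (h : (∀ d, mem y.pt d → mem z.pt d) ∧ (y.up → z.up)) => h.1)
    (fun y G h => ⟨⟨G, y.up, fun hu => h _ (y.ok hu)⟩, ⟨h, id⟩, rfl⟩)
    (fun G => ⟨⟨G, False, False.elim⟩, rfl⟩)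
  let b : LowerSet (DensY mem c) := ⟨{y | mem y.pt a ∨ y.up}, fun y z hzy hy =>
    hy.imp (hzy.1 _) hzy.2⟩
  have hb : ∀ y, y ∈ b ↔ mem y.pt a ∨ y.up := fun y => Iff.rfl
  have hsol : StrongOrd (f c) b ∧ StrongOrd b (f a) ∧ b ≠ ⊤ := by
    refine ⟨⟨le_antisymm ?_ le_himp, ?_⟩, ⟨le_antisymm ?_ le_himp, ?_⟩, ?_⟩
    · intro y hy
      have hy : y ∈ f c ⇨ b := hy
      rw [LowerSet.mem_himp_iff'] at hy
      by_contra hn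
      have hn : ¬ (mem y.pt a ∨ y.up) := hn
      push Not at hn
      obtain ⟨G, h1, h2, h3⟩ := himp_strong hr hca y.pt hn.1
      have := hy ⟨G, False, False.elim⟩ ⟨h1, hn.2⟩ ((hf _ _).2 h2)
      rcases this with h | h
      · exact h3 h
      · exact h
    · intro y hy
      refine (hf _ _).2 ?_
      rcases hy with h | h
      · exact repr_mono hr hca.2 _ h
      · exact y.ok h
    · intro y hy
      have hy : y ∈ b ⇨ f a := hy
      rw [LowerSet.mem_himp_iff'] at hy
      refine (hf _ _).2 ?_
      by_contra hn
      obtain ⟨G, h1, h2, h3⟩ := himp_strong hr hca y.pt hn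
      exact h3 ((hf _ _).1 (hy ⟨G, True, fun _ => h2⟩ ⟨h1, fun _ => trivial⟩ (Or.inr trivial)))
    · intro y hy
      exact Or.inl ((hf _ _).1 hy)
    · intro h
      obtain ⟨F, hF⟩ := repr_top hr ha
      have : (⟨F, False, False.elim⟩ : DensY mem c) ∈ b := by rw [h]; trivial
      rcases this with h | h
      · exact hF h
      · exact h
  let A : HeytingTerm (2 + 1) := .var 0
  let C : HeytingTerm (2 + 1) := .var 1
  let B : HeytingTerm (2 + 1) := .var 2
  let t : HeytingTerm (2 + 1) := .inf (.inf ((C.himp B).eqv B) (B.himp C))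
    (.inf ((B.himp A).eqv A) (A.himp B))
  obtain ⟨b', hb'⟩ := hE (LowerSet (DensY mem c)) f hinj t (fun _ : Fin 1 => B) ![a, c] (by
    refine ⟨![b], ?_, fun _ => ?_⟩
    · simp only [t, HeytingTerm.eval, inf_eq_top_iff, HeytingTerm.eval_eqv, himp_eq_top_iff]
      exact ⟨⟨hsol.1.1, hsol.1.2⟩, ⟨hsol.2.1.1, hsol.2.1.2⟩⟩
    · exact hsol.2.2)
  obtain ⟨h1, h2⟩ := hb'
  simp only [t, HeytingTerm.eval, inf_eq_top_iff, HeytingTerm.eval_eqv, himp_eq_top_iff] at h1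
  exact ⟨b' 0, h2 0, ⟨h1.1.1, h1.1.2⟩, ⟨h1.2.1, h1.2.2⟩⟩

theorem splitting_of.{u, v} {H : Type u} [HeytingAlgebra H] [Countable H]
    (hE : IsExtClosed.{u, v} H) : HasSplitting H := by
  intro a b₁ b₂ hba ha
  obtain ⟨X, mem, hr⟩ := exists_repr.{u, v} H
  letI : Preorder (SplitY mem b₁ b₂) := splitOrder (a := a)
  have hab₁ : a ≤ b₁ := hba.2.trans inf_le_left
  have hab₂ : a ≤ b₂ := hba.2.trans inf_le_right
  obtain ⟨f, hinj, hf⟩ := exists_ext hr (Y := SplitY mem b₁ b₂) (fun y => y.pt)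
    (fun y z (h : (∀ d, mem y.pt d → mem z.pt d) ∧
      (mem z.pt a ∨ ((y.l → z.l) ∧ (y.r → z.r)))) => h.1)
    (fun y G h => by
      by_cases hl : y.l
      · exact ⟨⟨G, True, False, by simp, fun _ => h _ (y.okl hl), False.elim, by simp⟩,
          ⟨h, Or.inr ⟨fun _ => trivial, fun hr => y.nlr ⟨hl, hr⟩⟩⟩, rfl⟩
      by_cases hr' : y.r
      · exact ⟨⟨G, False, True, by simp, False.elim, fun _ => h _ (y.okr hr'), by simp⟩,
          ⟨h, Or.inr ⟨hl, fun _ => trivial⟩⟩, rfl⟩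
      by_cases h1 : mem G b₁
      · exact ⟨⟨G, True, False, by simp, fun _ => h1, False.elim, by simp⟩,
          ⟨h, Or.inr ⟨fun _ => trivial, hr'⟩⟩, rfl⟩
      by_cases h2 : mem G b₂
      · exact ⟨⟨G, False, True, by simp, False.elim, fun _ => h2, by simp⟩,
          ⟨h, Or.inr ⟨hl, fun _ => trivial⟩⟩, rfl⟩
      · exact ⟨⟨G, False, False, by simp, False.elim, False.elim, by simp [h1, h2]⟩,
          ⟨h, Or.inr ⟨hl, hr'⟩⟩, rfl⟩)
    (fun G => by
      by_cases h1 : mem G b₁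
      · exact ⟨⟨G, True, False, by simp, fun _ => h1, False.elim, by simp⟩, rfl⟩
      by_cases h2 : mem G b₂
      · exact ⟨⟨G, False, True, by simp, False.elim, fun _ => h2, by simp⟩, rfl⟩
      · exact ⟨⟨G, False, False, by simp, False.elim, False.elim, by simp [h1, h2]⟩, rfl⟩)
  let a₁ : LowerSet (SplitY mem b₁ b₂) := ⟨{y | mem y.pt a ∨ y.l}, fun y z hzy hy => by
    rcases hy with hy | hy
    · exact Or.inl (hzy.1 _ hy)
    · exact hzy.2.imp id (fun h => h.1 hy)⟩
  let a₂ : LowerSet (SplitY mem b₁ b₂) := ⟨{y | mem y.pt a ∨ y.r}, fun y z hzy hy => by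
    rcases hy with hy | hy
    · exact Or.inl (hzy.1 _ hy)
    · exact hzy.2.imp id (fun h => h.2 hy)⟩
  have m₁ : ∀ y, y ∈ a₁ ↔ mem y.pt a ∨ y.l := fun y => Iff.rfl
  have m₂ : ∀ y, y ∈ a₂ ↔ mem y.pt a ∨ y.r := fun y => Iff.rfl
  have st : ∀ F, ¬ mem F a → ∃ G, (∀ d, mem F d → mem G d) ∧ mem G b₁ ∧ mem G b₂ ∧ ¬ mem G a := by
    intro F hF
    obtain ⟨G, h1, h2, h3⟩ := himp_strong hr hba F hF
    rw [hr.inf] at h2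
    exact ⟨G, h1, h2.1, h2.2, h3⟩
  obtain ⟨F₀, hF₀⟩ := repr_top hr ha
  obtain ⟨G₀, -, hG1, hG2, hG3⟩ := st F₀ hF₀
  have s1 : a₁ ≠ ⊤ := by
    intro h
    have : (⟨G₀, False, True, by simp, False.elim, fun _ => hG2, by simp⟩ :
      SplitY mem b₁ b₂) ∈ a₁ := by rw [h]; trivial
    exact this.elim hG3 id
  have s2 : a₂ ≠ ⊤ := by
    intro h
    have : (⟨G₀, True, False, by simp, fun _ => hG1, False.elim, by simp⟩ :
      SplitY mem b₁ b₂) ∈ a₂ := by rw [h]; trivial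
    exact this.elim hG3 id
  have s3 : a₂ ⇨ f a = a₁ := by
    ext y
    change y ∈ a₂ ⇨ f a ↔ y ∈ a₁
    rw [LowerSet.mem_himp_iff', m₁]
    constructor
    · intro h
      by_contra hn
      push Not at hn
      obtain ⟨G, h1, h2, h3, h4⟩ := st y.pt hn.1
      exact h4 ((hf _ _).1 (h ⟨G, False, True, by simp, False.elim, fun _ => h3, by simp⟩
        ⟨h1, Or.inr ⟨hn.2, fun _ => trivial⟩⟩ (Or.inr trivial)))
    · intro h z hzy hz
      rw [hf]
      rcases hz with hz | hz
      · exact hz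
      · rcases h with h | h
        · exact hzy.1 _ h
        · rcases hzy.2 with h' | h'
          · exact h'
          · exact absurd ⟨h'.1 h, hz⟩ z.nlr
  have s4 : a₁ ⇨ f a = a₂ := by
    ext y
    change y ∈ a₁ ⇨ f a ↔ y ∈ a₂
    rw [LowerSet.mem_himp_iff', m₂]
    constructor
    · intro h
      by_contra hn
      push Not at hn
      obtain ⟨G, h1, h2, h3, h4⟩ := st y.pt hn.1
      exact h4 ((hf _ _).1 (h ⟨G, True, False, by simp, fun _ => h2, False.elim, by simp⟩
        ⟨h1, Or.inr ⟨fun _ => trivial, hn.2⟩⟩ (Or.inr trivial)))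
    · intro h z hzy hz
      rw [hf]
      rcases hz with hz | hz
      · exact hz
      · rcases h with h | h
        · exact hzy.1 _ h
        · rcases hzy.2 with h' | h'
          · exact h'
          · exact absurd ⟨hz, h'.2 h⟩ z.nlr
  have s5 : a₁ ≤ f b₁ := by
    intro y hy
    exact (hf _ _).2 (hy.elim (repr_mono hr hab₁ _) y.okl)
  have s6 : a₂ ≤ f b₂ := by
    intro y hy
    exact (hf _ _).2 (hy.elim (repr_mono hr hab₂ _) y.okr)
  have s7 : a₁ ⊔ a₂ = f b₁ ⊔ f b₂ := by
    apply le_antisymm (sup_le_sup s5 s6)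
    intro y hy
    have hy : y ∈ f b₁ ⊔ f b₂ := hy
    change y ∈ a₁ ⊔ a₂
    rw [LowerSet.mem_sup_iff] at hy ⊢
    rw [hf, hf] at hy
    exact (y.ok0 hy).imp Or.inr Or.inr
  let A : HeytingTerm (3 + 2) := .var 0
  let B₁ : HeytingTerm (3 + 2) := .var 1
  let B₂ : HeytingTerm (3 + 2) := .var 2
  let A₁ : HeytingTerm (3 + 2) := .var 3
  let A₂ : HeytingTerm (3 + 2) := .var 4
  let t : HeytingTerm (3 + 2) := .inf (.inf ((A₂.himp A).eqv A₁) ((A₁.himp A).eqv A₂))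
    (.inf (.inf (A₁.himp B₁) (A₂.himp B₂)) ((A₁.sup A₂).eqv (B₁.sup B₂)))
  obtain ⟨b', hb'⟩ := hE (LowerSet (SplitY mem b₁ b₂)) f hinj t ![A₁, A₂] ![a, b₁, b₂] (by
    refine ⟨![a₁, a₂], ?_, fun k => ?_⟩
    · simp only [t, HeytingTerm.eval, inf_eq_top_iff, HeytingTerm.eval_eqv, himp_eq_top_iff]
      exact ⟨⟨s3, s4⟩, ⟨⟨s5, s6⟩, s7⟩⟩
    · fin_cases k
      · exact s1
      · exact s2)
  obtain ⟨h1, h2⟩ := hb'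
  simp only [t, HeytingTerm.eval, inf_eq_top_iff, HeytingTerm.eval_eqv, himp_eq_top_iff] at h1
  exact ⟨b' 0, b' 1, h2 0, h2 1, h1.1.1, h1.1.2, h1.2.1.1, h1.2.1.2, h1.2.2⟩

/-- A countable locally finite Heyting algebra is existentially closed iff it has the
Density and Splitting properties. -/
theorem countable_locallyFinite_extClosed_iff_density_splitting
    (H : Type*) [HeytingAlgebra H] [Countable H] (hlf : LocallyFiniteHA H) :
    IsExtClosed H ↔ HasDensity H ∧ HasSplitting H :=
  ⟨fun h => ⟨density_of h, splitting_of h⟩, fun h => extClosed_of hlf h.1 h.2⟩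
end

section
/- There exists a nontrivial, countable, locally finite, existentially closed Heyting algebra. -/
namespace HEC

/-- Bundled finite Heyting algebras. -/
structure FHA : Type 1 where
  carrier : Type
  [inst : HeytingAlgebra carrier]
  [fin : Finite carrier]

attribute [instance] FHA.inst FHA.fin

theorem eval_map {n : ℕ} {H K : Type*} [HeytingAlgebra H] [HeytingAlgebra K]
    (f : HeytingHom H K) (v : Fin n → H) (t : HeytingTerm n) :
    t.eval (fun i => f (v i)) = f (t.eval v) := by
  induction t with
  | var i => rfl
  | bot => simp [HeytingTerm.eval]
  | top => simp [HeytingTerm.eval]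
  | inf a b iha ihb => simp [HeytingTerm.eval, iha, ihb]
  | sup a b iha ihb => simp [HeytingTerm.eval, iha, ihb]
  | himp a b iha ihb => simp [HeytingTerm.eval, iha, ihb]

theorem append_map {l m : ℕ} {H K : Type*} (f : H → K) (a : Fin l → H) (b : Fin m → H) :
    Fin.append (fun i => f (a i)) (fun i => f (b i)) = fun i => f (Fin.append a b i) := by
  funext i
  refine Fin.addCases (fun i => ?_) (fun i => ?_) i <;> simp

theorem hasSolution_map {l m κ : ℕ} {H K : Type*} [HeytingAlgebra H] [HeytingAlgebra K]
    (f : HeytingHom H K) (hf : Function.Injective f)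
    (t : HeytingTerm (l + m)) (s : Fin κ → HeytingTerm (l + m)) (a : Fin l → H)
    (h : HasSolution t s a) : HasSolution t s (fun i => f (a i)) := by
  obtain ⟨b, hb1, hb2⟩ := h
  refine ⟨fun i => f (b i), ?_, fun k => ?_⟩
  · rw [append_map, eval_map, hb1, map_top]
  · rw [append_map, eval_map]
    intro h
    exact hb2 k (hf (h.trans (map_top f).symm))

/-! ### Amalgamation -/

theorem exists_supPrime {B : Type*} [HeytingAlgebra B] [Finite B] {x y : B} (h : ¬ x ≤ y) :
    ∃ z, SupPrime z ∧ z ≤ x ∧ ¬ z ≤ y := by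
  classical
  obtain ⟨s, hs, hirr⟩ := exists_supIrred_decomposition x
  by_contra hcon
  push Not at hcon
  apply h
  rw [← hs]
  refine Finset.sup_le fun b hb => ?_
  refine hcon b (hirr hb).supPrime ?_
  rw [← hs]
  exact Finset.le_sup (f := id) hb

theorem lift_point {A B C : Type*} [HeytingAlgebra A] [HeytingAlgebra B] [HeytingAlgebra C]
    [Finite A] [Finite C] (f : HeytingHom A B) (g : HeytingHom A C)
    {b : B} (hb : SupPrime b) (c : C) (h : ∀ a, c ≤ g a → b ≤ f a) :
    ∃ cc1, SupPrime cc1 ∧ cc1 ≤ c ∧ ∀ a, b ≤ f a ↔ cc1 ≤ g a := by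
  classical
  cases nonempty_fintype A
  set p : A := (Finset.univ.filter fun a => b ≤ f a).inf id with hp
  set r : A := (Finset.univ.filter fun a => ¬ b ≤ f a).sup id with hr
  have hbp : b ≤ f p := by
    rw [hp, map_finset_inf]
    exact Finset.le_inf fun a ha => (Finset.mem_filter.1 ha).2
  have hbr : ¬ b ≤ f r := by
    rw [hr, map_finset_sup, hb.le_finset_sup]
    rintro ⟨a, ha, hba⟩
    exact (Finset.mem_filter.1 ha).2 hba
  have key : ¬ c ⊓ g p ≤ g r := by
    intro hle
    rw [← le_himp_iff, ← map_himp] at hle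
    have := h _ hle
    rw [map_himp, le_himp_iff, inf_eq_left.2 hbp] at this
    exact hbr this
  obtain ⟨z, hz, hzle, hzn⟩ := exists_supPrime key
  refine ⟨z, hz, hzle.trans inf_le_left, fun a => ⟨fun hba => ?_, fun hza => ?_⟩⟩
  · refine (hzle.trans inf_le_right).trans (OrderHomClass.mono g ?_)
    exact Finset.inf_le (f := id) (Finset.mem_filter.2 ⟨Finset.mem_univ _, hba⟩)
  · by_contra hba
    refine hzn (hza.trans (OrderHomClass.mono g ?_))
    exact Finset.le_sup (f := id) (Finset.mem_filter.2 ⟨Finset.mem_univ _, hba⟩)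

/-- The fibre product of the dual posets. -/
def Pt {A B C : Type} [HeytingAlgebra A] [HeytingAlgebra B] [HeytingAlgebra C]
    (f : HeytingHom A B) (g : HeytingHom A C) : Type :=
  {x : B × C // SupPrime x.1 ∧ SupPrime x.2 ∧ ∀ a, x.1 ≤ f a ↔ x.2 ≤ g a}

instance {A B C : Type} [HeytingAlgebra A] [HeytingAlgebra B] [HeytingAlgebra C]
    (f : HeytingHom A B) (g : HeytingHom A C) : PartialOrder (Pt f g) :=
  inferInstanceAs (PartialOrder (Subtype _))

instance {A B C : Type} [HeytingAlgebra A] [HeytingAlgebra B] [HeytingAlgebra C]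
    [Finite B] [Finite C]
    (f : HeytingHom A B) (g : HeytingHom A C) : Finite (Pt f g) :=
  inferInstanceAs (Finite (Subtype _))

/-- A general construction of embeddings in lower set algebras. -/
theorem exists_hom {B X : Type} [HeytingAlgebra B] [Finite B] [PartialOrder X]
    (π : X → B) (hprime : ∀ x, SupPrime (π x)) (hmono : Monotone π)
    (hback : ∀ x b, SupPrime b → b ≤ π x → ∃ y ≤ x, π y = b)
    (hsurj : ∀ b, SupPrime b → ∃ y, π y = b) :
    ∃ F : HeytingHom B (LowerSet X), Function.Injective F ∧ ∀ b x, x ∈ F b ↔ π x ≤ b := by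
  let F : B → LowerSet X := fun b => ⟨{x | π x ≤ b}, fun x y hyx hx => (hmono hyx).trans hx⟩
  have hF : ∀ b x, x ∈ F b ↔ π x ≤ b := fun b x => Iff.rfl
  have hFm : Monotone F := fun b bb1 h x hx => le_trans hx h
  refine ⟨{ toFun := F, map_sup' := ?_, map_inf' := ?_, map_bot' := ?_, map_himp' := ?_ }, ?_, hF⟩
  · intro a b
    ext x
    simp only [SetLike.mem_coe, LowerSet.mem_sup_iff, hF]
    exact (hprime x).le_sup
  · intro a b
    ext x
    simp only [SetLike.mem_coe, LowerSet.mem_inf_iff, hF]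
    exact le_inf_iff
  · ext x
    simp only [SetLike.mem_coe, hF, le_bot_iff, LowerSet.notMem_bot, iff_false]
    exact (hprime x).ne_bot
  · intro a b
    refine le_antisymm ?_ ?_
    · rw [le_himp_iff]
      intro x hx
      have h1 : π x ≤ a ⇨ b := hx.1
      have h2 : π x ≤ a := hx.2
      rw [le_himp_iff] at h1
      exact (le_inf le_rfl h2).trans h1
    · intro x hx
      have hx' : LowerSet.Iic x ≤ F a ⇨ F b := LowerSet.Iic_le.2 hx
      rw [le_himp_iff] at hx'
      show π x ≤ a ⇨ b
      rw [le_himp_iff]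
      by_contra hcon
      obtain ⟨z, hz, hzl, hzn⟩ := exists_supPrime hcon
      obtain ⟨y, hyx, rfl⟩ := hback x z hz (hzl.trans inf_le_left)
      exact hzn (hx' (show y ∈ LowerSet.Iic x ⊓ F a from ⟨hyx, hzl.trans inf_le_right⟩))
  · have key : ∀ a b, F a ≤ F b → a ≤ b := by
      intro a b h
      by_contra hcon
      obtain ⟨z, hz, hzl, hzn⟩ := exists_supPrime hcon
      obtain ⟨y, rfl⟩ := hsurj z hz
      exact hzn (h (show y ∈ F a from hzl))
    intro a b h
    exact le_antisymm (key _ _ (le_of_eq h)) (key _ _ (ge_of_eq h))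

theorem amalgamation (A B C : FHA) (f : HeytingHom A.carrier B.carrier)
    (g : HeytingHom A.carrier C.carrier) (hf : Function.Injective f) (hg : Function.Injective g) :
    ∃ (D : FHA) (F : HeytingHom B.carrier D.carrier) (G : HeytingHom C.carrier D.carrier),
      Function.Injective F ∧ Function.Injective G ∧ ∀ a, F (f a) = G (g a) := by
  have hfin : Finite (LowerSet (Pt f g)) :=
    Finite.of_injective (fun s : LowerSet (Pt f g) => (s : Set (Pt f g))) SetLike.coe_injective
  obtain ⟨F, hF, hF'⟩ := exists_hom (X := Pt f g) (fun x => x.1.1) (fun x => x.2.1)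
    (fun x y h => (show x.1 ≤ y.1 from h).1)
    (by
      intro x b hb hbx
      obtain ⟨c, hc, hcx, hcomp⟩ := lift_point f g hb x.1.2
        (fun a ha => hbx.trans ((x.2.2.2 a).2 ha))
      exact ⟨⟨(b, c), hb, hc, hcomp⟩, ⟨hbx, hcx⟩, rfl⟩)
    (by
      intro b hb
      obtain ⟨c, hc, hcx, hcomp⟩ := lift_point f g hb ⊤
        (fun a ha => by
          have : a = ⊤ := hg (by rw [map_top]; exact top_le_iff.1 ha)
          simp [this])
      exact ⟨⟨(b, c), hb, hc, hcomp⟩, rfl⟩)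
  obtain ⟨G, hG, hG'⟩ := exists_hom (X := Pt f g) (fun x => x.1.2) (fun x => x.2.2.1)
    (fun x y h => (show x.1 ≤ y.1 from h).2)
    (by
      intro x b hb hbx
      obtain ⟨c, hc, hcx, hcomp⟩ := lift_point g f hb x.1.1
        (fun a ha => hbx.trans ((x.2.2.2 a).1 ha))
      exact ⟨⟨(c, b), hc, hb, fun a => (hcomp a).symm⟩, ⟨hcx, hbx⟩, rfl⟩)
    (by
      intro b hb
      obtain ⟨c, hc, hcx, hcomp⟩ := lift_point g f hb ⊤
        (fun a ha => by
          have : a = ⊤ := hf (by rw [map_top]; exact top_le_iff.1 ha)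
          simp [this])
      exact ⟨⟨(c, b), hc, hb, fun a => (hcomp a).symm⟩, rfl⟩)
  refine ⟨⟨LowerSet (Pt f g)⟩, F, G, hF, hG, fun a => ?_⟩
  ext x
  rw [SetLike.mem_coe, SetLike.mem_coe, hF', hG']
  exact x.2.2.2 a

/-! ### Finite model property -/

theorem build {X : Type} [Finite X] {K : Type*} [HeytingAlgebra K] (e : X → K)
    (he : Function.Injective e) (hbot : ∃ z, e z = ⊥) (htop : ∃ z, e z = ⊤)
    (hinf : ∀ x y, ∃ z, e z = e x ⊓ e y) (hsup : ∀ x y, ∃ z, e z = e x ⊔ e y) :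
    ∃ inst : HeytingAlgebra X, letI := inst
      e ⊥ = ⊥ ∧ e ⊤ = ⊤ ∧ (∀ x y, e (x ⊓ y) = e x ⊓ e y) ∧ (∀ x y, e (x ⊔ y) = e x ⊔ e y) ∧
      (∀ x y z, e z = e x ⇨ e y → x ⇨ y = z) := by
  classical
  cases nonempty_fintype X
  have hfs : ∀ s : Finset X, ∃ z, e z = s.sup e := by
    intro s
    induction s using Finset.induction_on with
    | empty => simpa using hbot
    | insert a s _ ih =>
      obtain ⟨z, hz⟩ := ih
      rw [Finset.sup_insert, ← hz]
      exact hsup a z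
  have hhimp : ∀ x y, ∃ z, ∀ w, e w ≤ e z ↔ e w ⊓ e x ≤ e y := by
    intro x y
    obtain ⟨z, hz⟩ := hfs (Finset.univ.filter fun w => e w ⊓ e x ≤ e y)
    refine ⟨z, fun w => ⟨fun h => ?_, fun h => ?_⟩⟩
    · rw [← le_himp_iff]
      refine h.trans ?_
      rw [hz]
      exact Finset.sup_le fun v hv => le_himp_iff.2 (Finset.mem_filter.1 hv).2
    · rw [hz]
      exact Finset.le_sup (f := e) (Finset.mem_filter.2 ⟨Finset.mem_univ _, h⟩)
  obtain ⟨b, hb⟩ := hbot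
  obtain ⟨t, ht⟩ := htop
  choose i hi using hinf
  choose s hs using hsup
  choose h hh using hhimp
  let inst : HeytingAlgebra X :=
    { le := fun x y => e x ≤ e y
      le_refl := fun x => le_rfl
      le_trans := fun x y z h1 h2 => le_trans (α := K) h1 h2
      le_antisymm := fun x y h1 h2 => he (le_antisymm h1 h2)
      sup := s
      le_sup_left := fun x y => by show e x ≤ e _; rw [hs]; exact le_sup_left
      le_sup_right := fun x y => by show e y ≤ e _; rw [hs]; exact le_sup_right
      sup_le := fun x y z h1 h2 => by show e _ ≤ e _; rw [hs]; exact sup_le h1 h2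
      inf := i
      inf_le_left := fun x y => by show e _ ≤ e _; rw [hi]; exact inf_le_left
      inf_le_right := fun x y => by show e _ ≤ e _; rw [hi]; exact inf_le_right
      le_inf := fun x y z h1 h2 => by show e _ ≤ e _; rw [hi]; exact le_inf h1 h2
      top := t
      le_top := fun x => by show e _ ≤ e _; rw [ht]; exact le_top
      bot := b
      bot_le := fun x => by show e _ ≤ e _; rw [hb]; exact bot_le
      himp := h
      le_himp_iff := fun x y z => by
        show e x ≤ e (h y z) ↔ e (i x y) ≤ e z
        rw [hh, hi]
      compl := fun x => h x b
      himp_bot := fun x => rfl }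
  refine ⟨inst, hb, ht, hi, hs, fun x y z hz => ?_⟩
  apply he
  apply le_antisymm
  · rw [hz, le_himp_iff]
    exact (hh x y _).1 le_rfl
  · refine (hh x y z).2 ?_
    rw [hz]
    exact himp_inf_le

/-- Values of all subterms. -/
def subvals {n : ℕ} {H : Type*} [HeytingAlgebra H] (v : Fin n → H) : HeytingTerm n → Set H
  | .var i => {v i}
  | .bot => {⊥}
  | .top => {⊤}
  | .inf a b => insert (a.eval v ⊓ b.eval v) (subvals v a ∪ subvals v b)
  | .sup a b => insert (a.eval v ⊔ b.eval v) (subvals v a ∪ subvals v b)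
  | .himp a b => insert (a.eval v ⇨ b.eval v) (subvals v a ∪ subvals v b)

theorem subvals_finite {n : ℕ} {H : Type*} [HeytingAlgebra H] (v : Fin n → H)
    (t : HeytingTerm n) : (subvals v t).Finite := by
  induction t with
  | var i => exact Set.finite_singleton _
  | bot => exact Set.finite_singleton _
  | top => exact Set.finite_singleton _
  | inf a b iha ihb => exact (iha.union ihb).insert _
  | sup a b iha ihb => exact (iha.union ihb).insert _
  | himp a b iha ihb => exact (iha.union ihb).insert _

theorem eval_partial {n : ℕ} {X K : Type*} [HeytingAlgebra X] [HeytingAlgebra K] (e : X → K)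
    (h0 : e ⊥ = ⊥) (h1 : e ⊤ = ⊤) (hi : ∀ x y, e (x ⊓ y) = e x ⊓ e y)
    (hs : ∀ x y, e (x ⊔ y) = e x ⊔ e y) (hh : ∀ x y z, e z = e x ⇨ e y → x ⇨ y = z)
    (v : Fin n → X) (t : HeytingTerm n) (ht : subvals (fun i => e (v i)) t ⊆ Set.range e) :
    e (t.eval v) = t.eval (fun i => e (v i)) := by
  induction t with
  | var i => rfl
  | bot => exact h0
  | top => exact h1
  | inf a b iha ihb =>
    simp only [subvals, Set.insert_subset_iff, Set.union_subset_iff] at ht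
    simp only [HeytingTerm.eval, hi, iha ht.2.1, ihb ht.2.2]
  | sup a b iha ihb =>
    simp only [subvals, Set.insert_subset_iff, Set.union_subset_iff] at ht
    simp only [HeytingTerm.eval, hs, iha ht.2.1, ihb ht.2.2]
  | himp a b iha ihb =>
    simp only [subvals, Set.insert_subset_iff, Set.union_subset_iff] at ht
    obtain ⟨⟨z, hz⟩, h2, h3⟩ := ht
    simp only [HeytingTerm.eval]
    rw [hh (a.eval v) (b.eval v) z (by rw [hz, iha h2, ihb h3]), hz]

/-- Solvability of a system in a finite extension. -/
def FinSolv {l m κ : ℕ} (A : FHA) (t : HeytingTerm (l + m)) (s : Fin κ → HeytingTerm (l + m))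
    (a : Fin l → A.carrier) : Prop :=
  ∃ (L : FHA) (j : HeytingHom A.carrier L.carrier), Function.Injective j ∧
    HasSolution t s (fun i => j (a i))

theorem finSolv_of_ext {l m κ : ℕ} (A : FHA) {K : Type*} [HeytingAlgebra K]
    (f : HeytingHom A.carrier K) (hf : Function.Injective f)
    (t : HeytingTerm (l + m)) (s : Fin κ → HeytingTerm (l + m)) (a : Fin l → A.carrier)
    (h : HasSolution t s (fun i => f (a i))) : FinSolv A t s a := by
  obtain ⟨b, hb1, hb2⟩ := h
  set v : Fin (l + m) → K := Fin.append (fun i => f (a i)) b with hv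
  let S : Set K := Set.range f ∪ Set.range b ∪ subvals v t ∪ ⋃ k, subvals v (s k)
  have hS : S.Finite := (((Set.finite_range f).union (Set.finite_range b)).union
    (subvals_finite v t)).union (Set.finite_iUnion fun k => subvals_finite v (s k))
  have hT : (latticeClosure S).Finite := hS.latticeClosure
  have hST : S ⊆ latticeClosure S := subset_latticeClosure
  have hsub : IsSublattice (latticeClosure S) := isSublattice_latticeClosure
  have : Finite (latticeClosure S) := hT
  obtain ⟨n, ⟨E⟩⟩ := Finite.exists_equiv_fin (latticeClosure S)
  obtain ⟨X, hX, ⟨E⟩⟩ : ∃ X : Type, Finite X ∧ Nonempty (X ≃ latticeClosure S) :=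
    ⟨Fin n, inferInstance, ⟨E.symm⟩⟩
  let e : X → K := fun x => (E x : K)
  have he : Function.Injective e := Subtype.val_injective.comp E.injective
  have hr : ∀ y, y ∈ latticeClosure S → ∃ z, e z = y := fun y hy => ⟨E.symm ⟨y, hy⟩, by simp [e]⟩
  have hfS : ∀ x, f x ∈ latticeClosure S := fun x => hST (.inl (.inl (.inl ⟨x, rfl⟩)))
  have hbS : ∀ x, b x ∈ latticeClosure S := fun x => hST (.inl (.inl (.inr ⟨x, rfl⟩)))
  have heS : ∀ x, e x ∈ latticeClosure S := fun x => (E x).2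
  obtain ⟨inst, h0, h1, hi, hs, hh⟩ := build e he
    (hr _ (by rw [← map_bot f]; exact hfS _)) (hr _ (by rw [← map_top f]; exact hfS _))
    (fun x y => hr _ (hsub.infClosed (heS x) (heS y)))
    (fun x y => hr _ (hsub.supClosed (heS x) (heS y)))
  choose j hj using fun x => hr _ (hfS x)
  choose bb1 hb' using fun x => hr _ (hbS x)
  have hev : (fun i => e (Fin.append (fun i => j (a i)) bb1 i)) = v := by
    rw [hv, ← append_map]
    simp only [hj, hb']
  refine ⟨⟨X⟩, { toFun := j, map_sup' := ?_, map_inf' := ?_, map_bot' := ?_, map_himp' := ?_ },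
    ?_, bb1, ?_, ?_⟩
  · intro x y
    apply he
    rw [hs, hj, hj, hj, map_sup]
  · intro x y
    apply he
    rw [hi, hj, hj, hj, map_inf]
  · apply he
    rw [hj, h0, map_bot]
  · intro x y
    symm
    apply hh
    rw [hj, hj, hj, map_himp]
  · intro x y hxy
    apply hf
    rw [← hj, ← hj]
    exact congrArg e hxy
  · apply he
    have := eval_partial e h0 h1 hi hs hh (Fin.append (fun i => j (a i)) bb1) t
      (by rw [hev]; exact fun y hy => hr y (hST (.inl (.inr hy))))
    rw [hev] at this
    refine this.trans ?_
    rw [h1, hb1]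
  · intro k hk
    apply hb2 k
    have := eval_partial e h0 h1 hi hs hh (Fin.append (fun i => j (a i)) bb1) (s k)
      (by rw [hev]; exact fun y hy => hr y (hST (.inr (Set.mem_iUnion.2 ⟨k, hy⟩))))
    rw [hev] at this
    refine this.symm.trans ?_
    rw [← h1]
    exact congrArg e hk

/-! ### The one-step extension -/

theorem step_aux {l m κ : ℕ} (A : FHA) (t : HeytingTerm (l + m))
    (s : Fin κ → HeytingTerm (l + m)) (T : Finset (Fin l → A.carrier)) :
    ∃ (B : FHA) (i : HeytingHom A.carrier B.carrier), Function.Injective i ∧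
      ∀ a ∈ T, FinSolv A t s a → HasSolution t s (fun k => i (a k)) := by
  classical
  induction T using Finset.induction_on with
  | empty => exact ⟨A, HeytingHom.id _, fun x y h => h, by simp⟩
  | insert a T _ ih =>
    obtain ⟨B, i, hi, hB⟩ := ih
    by_cases ha : FinSolv A t s a
    · obtain ⟨L, j, hj, hL⟩ := ha
      obtain ⟨D, F, G, hF, hG, hc⟩ := amalgamation A B L i j hi hj
      refine ⟨D, F.comp i, hF.comp hi, fun aa1 ha' hsol => ?_⟩
      rcases Finset.mem_insert.1 ha' with rfl | ha'
      · have := hasSolution_map G hG t s _ hL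
        simpa only [HeytingHom.comp_apply, hc] using this
      · exact hasSolution_map F hF t s _ (hB aa1 ha' hsol)
    · refine ⟨B, i, hi, fun aa1 ha' hsol => ?_⟩
      rcases Finset.mem_insert.1 ha' with rfl | ha'
      · exact absurd hsol ha
      · exact hB aa1 ha' hsol

/-- Systems. -/
def Sys : Type := Σ l m κ : ℕ, HeytingTerm (l + m) × (Fin κ → HeytingTerm (l + m))

theorem step (A : FHA) (S : Sys) :
    ∃ (B : FHA) (i : HeytingHom A.carrier B.carrier), Function.Injective i ∧
      ∀ a : Fin S.1 → A.carrier, FinSolv A S.2.2.2.1 S.2.2.2.2 a →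
        HasSolution S.2.2.2.1 S.2.2.2.2 (fun k => i (a k)) := by
  classical
  cases nonempty_fintype A.carrier
  obtain ⟨B, i, hi, h⟩ := step_aux A S.2.2.2.1 S.2.2.2.2 Finset.univ
  exact ⟨B, i, hi, fun a => h a (Finset.mem_univ _)⟩

/-- Coding of terms. -/
def code {n : ℕ} : HeytingTerm n → ℕ
  | .var i => Nat.pair 0 i
  | .bot => Nat.pair 1 0
  | .top => Nat.pair 2 0
  | .inf a b => Nat.pair 3 (Nat.pair (code a) (code b))
  | .sup a b => Nat.pair 4 (Nat.pair (code a) (code b))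
  | .himp a b => Nat.pair 5 (Nat.pair (code a) (code b))

theorem code_injective {n : ℕ} : Function.Injective (code (n := n)) := by
  intro a
  induction a with
  | var i => intro b h; cases b <;> simp_all [code, Nat.pair_eq_pair, Fin.ext_iff]
  | bot => intro b h; cases b <;> simp_all [code, Nat.pair_eq_pair]
  | top => intro b h; cases b <;> simp_all [code, Nat.pair_eq_pair]
  | inf a b iha ihb =>
    intro c h
    cases c <;> simp [code, Nat.pair_eq_pair] at h ⊢
    exact ⟨iha h.1, ihb h.2⟩
  | sup a b iha ihb =>
    intro c h
    cases c <;> simp [code, Nat.pair_eq_pair] at h ⊢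
    exact ⟨iha h.1, ihb h.2⟩
  | himp a b iha ihb =>
    intro c h
    cases c <;> simp [code, Nat.pair_eq_pair] at h ⊢
    exact ⟨iha h.1, ihb h.2⟩

instance {n : ℕ} : Countable (HeytingTerm n) := code_injective.countable

instance : Countable Sys := by unfold Sys; infer_instance

instance : Nonempty Sys := ⟨⟨0, 0, 0, .top, fun _ => .top⟩⟩

/-! ### Direct limits of chains -/

theorem exists_limit (A : ℕ → FHA) (i : ∀ n, HeytingHom (A n).carrier (A (n + 1)).carrier)
    (hi : ∀ n, Function.Injective (i n)) :
    ∃ (H : Type) (inst : HeytingAlgebra H) (ι : ∀ n, HeytingHom (A n).carrier H),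
      (∀ n, Function.Injective (ι n)) ∧ (∀ n x, ι (n + 1) (i n x) = ι n x) ∧
      ∀ x : H, ∃ n a, ι n a = x := by
  let φ : ∀ m n, m ≤ n → HeytingHom (A m).carrier (A n).carrier := fun m n h =>
    Nat.leRec (motive := fun k _ => HeytingHom (A m).carrier (A k).carrier)
      (HeytingHom.id _) (fun k _ g => (i k).comp g) h
  have φ0 : ∀ m x, φ m m le_rfl x = x := by
    intro m x
    simp [φ]
  have φs : ∀ m n (h : m ≤ n) x, φ m (n + 1) (h.trans (Nat.le_succ n)) x = i n (φ m n h x) := by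
    intro m n h x
    simp only [φ]
    rw [Nat.leRec_succ _ _ h]
    rfl
  have φt : ∀ m n k (h : m ≤ n) (hmpH : n ≤ k) x, φ n k hmpH (φ m n h x) = φ m k (h.trans hmpH) x := by
    intro m n k h hmpH x
    induction k, hmpH using Nat.le_induction with
    | base => rw [φ0]
    | succ k hk ih => rw [φs n k hk, ih, φs m k (h.trans hk)]
  have φi : ∀ m n h, Function.Injective (φ m n h) := by
    intro m n h
    induction n, h using Nat.le_induction with
    | base => intro x y hxy; rwa [φ0, φ0] at hxy
    | succ n hn ih =>
      intro x y hxy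
      rw [φs m n hn, φs m n hn] at hxy
      exact ih (hi n hxy)
  have ds : DirectedSystem (fun n => (A n).carrier) (fun m n h => φ m n h) :=
    ⟨fun m x => φ0 m x, fun k j i h hmpH x => φt _ _ _ h hmpH x⟩
  let H := DirectLimit (fun n => (A n).carrier) φ
  let mk : ∀ n, (A n).carrier → H := fun n x => (⟦⟨n, x⟩⟧ : DirectLimit (fun n => (A n).carrier) φ)
  let infH : H → H → H := DirectLimit.map₂ φ φ φ (fun n x y => x ⊓ y) (fun _ _ _ _ _ => map_inf _ _ _)
  let supH : H → H → H := DirectLimit.map₂ φ φ φ (fun n x y => x ⊔ y) (fun _ _ _ _ _ => map_sup _ _ _)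
  let hmpH : H → H → H := DirectLimit.map₂ φ φ φ (fun n x y => x ⇨ y)
    (fun _ _ _ _ _ => map_himp _ _ _)
  have hi' : ∀ n x y, infH (mk n x) (mk n y) = mk n (x ⊓ y) := fun n x y =>
    DirectLimit.map₂_def φ φ φ _ _ n x y
  have hs' : ∀ n x y, supH (mk n x) (mk n y) = mk n (x ⊔ y) := fun n x y =>
    DirectLimit.map₂_def φ φ φ _ _ n x y
  have hh' : ∀ n x y, hmpH (mk n x) (mk n y) = mk n (x ⇨ y) := fun n x y =>
    DirectLimit.map₂_def φ φ φ _ _ n x y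
  have mkφ : ∀ m n h x, mk n (φ m n h x) = mk m x := fun m n h x =>
    DirectLimit.mk_apply (f := φ) m n x h
  have mki : ∀ n, Function.Injective (mk n) := DirectLimit.mk_injective φ φi
  have ind3 : ∀ x y z : H, ∃ n a b c, x = mk n a ∧ y = mk n b ∧ z = mk n c :=
    DirectLimit.exists_eq_mk₃ φ
  have hbot : ∀ n, mk n ⊥ = mk 0 ⊥ := fun n => by
    rw [← mkφ 0 n (Nat.zero_le n), map_bot]
  have htop : ∀ n, mk n ⊤ = mk 0 ⊤ := fun n => by
    rw [← mkφ 0 n (Nat.zero_le n), map_top]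
  clear_value mk infH supH hmpH H
  have hle : ∀ n a b, infH (mk n a) (mk n b) = mk n a ↔ a ≤ b := fun n a b => by
    rw [hi', (mki n).eq_iff, inf_eq_left]
  let inst : HeytingAlgebra H :=
    { le := fun x y => infH x y = x
      le_refl := fun x => by
        obtain ⟨n, a, b, c, rfl, -, -⟩ := ind3 x x x
        exact (hle _ _ _).2 le_rfl
      le_trans := fun x y z h1 h2 => by
        obtain ⟨n, a, b, c, rfl, rfl, rfl⟩ := ind3 x y z
        exact (hle _ _ _).2 (((hle _ _ _).1 h1).trans ((hle _ _ _).1 h2))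
      le_antisymm := fun x y h1 h2 => by
        obtain ⟨n, a, b, c, rfl, rfl, -⟩ := ind3 x y y
        exact congrArg _ (le_antisymm ((hle _ _ _).1 h1) ((hle _ _ _).1 h2))
      sup := supH
      le_sup_left := fun x y => by
        obtain ⟨n, a, b, c, rfl, rfl, -⟩ := ind3 x y y
        rw [hs']
        exact (hle _ _ _).2 le_sup_left
      le_sup_right := fun x y => by
        obtain ⟨n, a, b, c, rfl, rfl, -⟩ := ind3 x y y
        rw [hs']
        exact (hle _ _ _).2 le_sup_right
      sup_le := fun x y z h1 h2 => by
        obtain ⟨n, a, b, c, rfl, rfl, rfl⟩ := ind3 x y z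
        rw [hs']
        exact (hle _ _ _).2 (sup_le ((hle _ _ _).1 h1) ((hle _ _ _).1 h2))
      inf := infH
      inf_le_left := fun x y => by
        obtain ⟨n, a, b, c, rfl, rfl, -⟩ := ind3 x y y
        rw [hi']
        exact (hle _ _ _).2 inf_le_left
      inf_le_right := fun x y => by
        obtain ⟨n, a, b, c, rfl, rfl, -⟩ := ind3 x y y
        rw [hi']
        exact (hle _ _ _).2 inf_le_right
      le_inf := fun x y z h1 h2 => by
        obtain ⟨n, a, b, c, rfl, rfl, rfl⟩ := ind3 x y z
        rw [hi']
        exact (hle _ _ _).2 (le_inf ((hle _ _ _).1 h1) ((hle _ _ _).1 h2))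
      top := mk 0 ⊤
      le_top := fun x => by
        obtain ⟨n, a, b, c, rfl, -, -⟩ := ind3 x x x
        rw [← htop n]
        exact (hle _ _ _).2 le_top
      bot := mk 0 ⊥
      bot_le := fun x => by
        obtain ⟨n, a, b, c, rfl, -, -⟩ := ind3 x x x
        rw [← hbot n]
        exact (hle _ _ _).2 bot_le
      himp := hmpH
      le_himp_iff := fun x y z => by
        obtain ⟨n, a, b, c, rfl, rfl, rfl⟩ := ind3 x y z
        show infH (mk n a) (hmpH (mk n b) (mk n c)) = mk n a ↔
          infH (infH (mk n a) (mk n b)) (mk n c) = infH (mk n a) (mk n b)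
        rw [hh', hi' n a b]
        exact (hle _ _ _).trans (le_himp_iff.trans (hle _ _ _).symm)
      compl := fun x => hmpH x (mk 0 ⊥)
      himp_bot := fun x => rfl }
  refine ⟨H, inst, fun n =>
    { toFun := mk n
      map_sup' := fun x y => (hs' n x y).symm
      map_inf' := fun x y => (hi' n x y).symm
      map_bot' := hbot n
      map_himp' := fun x y => (hh' n x y).symm }, mki, fun n x => ?_, fun x => ?_⟩
  · have := mkφ n (n + 1) (Nat.le_succ n) x
    rw [φs n n le_rfl, φ0] at this
    exact this
  · obtain ⟨n, a, b, c, h, -, -⟩ := ind3 x x x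
    exact ⟨n, a, h.symm⟩

end HEC

theorem exists_nontrivial_countable_locallyFinite_extClosed :
    ∃ (H : Type) (inst : HeytingAlgebra H),
      letI := inst
      (⊥ : H) ≠ ⊤ ∧ Countable H ∧ LocallyFiniteHA H ∧ IsExtClosed H := by
  classical
  obtain ⟨e, he⟩ := exists_surjective_nat HEC.Sys
  choose nx ii hii hsol using HEC.step
  let A : ℕ → HEC.FHA := fun n =>
    Nat.rec (motive := fun _ => HEC.FHA) ⟨Bool⟩ (fun k B => nx B (e (Nat.unpair k).2)) n
  obtain ⟨H, inst, ι, hι, hcomp, hex⟩ := HEC.exists_limit A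
    (fun n => ii (A n) (e (Nat.unpair n).2)) (fun n => hii (A n) (e (Nat.unpair n).2))
  have hup1 : ∀ m n, m ≤ n → ∀ a, ∃ b, ι n b = ι m a := by
    intro m n h a
    induction n, h using Nat.le_induction with
    | base => exact ⟨a, rfl⟩
    | succ n hn ih =>
      obtain ⟨b, hb⟩ := ih
      exact ⟨_, (hcomp n b).trans hb⟩
  have hupf : ∀ s : Finset H, ∃ n, ∀ x ∈ s, ∃ a, ι n a = x := by
    intro s
    induction s using Finset.induction_on with
    | empty => exact ⟨0, by simp⟩
    | insert x s _ ih =>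
      obtain ⟨n, hn⟩ := ih
      obtain ⟨m, a, rfl⟩ := hex x
      refine ⟨max m n, fun y hy => ?_⟩
      rcases Finset.mem_insert.1 hy with rfl | hy
      · exact hup1 _ _ (le_max_left _ _) a
      · obtain ⟨b, rfl⟩ := hn y hy
        exact hup1 _ _ (le_max_right _ _) b
  refine ⟨H, inst, ?_, ?_, ?_, ?_⟩
  · intro h
    have : (⊥ : (A 0).carrier) = ⊤ := hι 0 (by rw [map_bot, map_top, h])
    exact Bool.false_ne_true this
  · have hs : Function.Surjective (fun p : Σ n, (A n).carrier => ι p.1 p.2) := fun x => by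
      obtain ⟨n, a, h⟩ := hex x
      exact ⟨⟨n, a⟩, h⟩
    exact hs.countable
  · intro s
    obtain ⟨n, hn⟩ := hupf s
    refine ⟨{ carrier := Set.range (ι n)
              bot_mem := ⟨⊥, map_bot _⟩
              top_mem := ⟨⊤, map_top _⟩
              inf_mem := ?_
              sup_mem := ?_
              himp_mem := ?_ }, Set.finite_range _, fun x hx => hn x hx⟩
    · rintro _ _ ⟨a, rfl⟩ ⟨b, rfl⟩
      exact ⟨_, map_inf _ _ _⟩
    · rintro _ _ ⟨a, rfl⟩ ⟨b, rfl⟩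
      exact ⟨_, map_sup _ _ _⟩
    · rintro _ _ ⟨a, rfl⟩ ⟨b, rfl⟩
      exact ⟨_, map_himp _ _ _⟩
  · intro K _ f hf l m κ t s a h
    obtain ⟨n, hn⟩ := hupf (Finset.univ.image a)
    obtain ⟨c, hc⟩ := he ⟨l, m, κ, t, s⟩
    have hN : ∀ i, ∃ b, ι (Nat.pair n c) b = a i := fun i => by
      obtain ⟨b, hb⟩ := hn (a i) (Finset.mem_image_of_mem _ (Finset.mem_univ _))
      rw [← hb]
      exact hup1 _ _ (Nat.left_le_pair n c) b
    choose aa1 ha' using hN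
    have hcode : e (Nat.unpair (Nat.pair n c)).2 = ⟨l, m, κ, t, s⟩ := by
      rw [Nat.unpair_pair]; exact hc
    have hfin : HEC.FinSolv (A (Nat.pair n c)) t s aa1 := by
      refine HEC.finSolv_of_ext _ (f.comp (ι (Nat.pair n c))) (hf.comp (hι _)) t s aa1 ?_
      simpa only [HeytingHom.comp_apply, ha'] using h
    have hcomp' := hcomp (Nat.pair n c)
    have hs := hsol (A (Nat.pair n c)) (e (Nat.unpair (Nat.pair n c)).2)
    have hιn : ∃ (B : HEC.FHA) (j : HeytingHom (A (Nat.pair n c)).carrier B.carrier)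
        (ιB : HeytingHom B.carrier H), Function.Injective ιB ∧
        (∀ x, ιB (j x) = ι (Nat.pair n c) x) ∧ HasSolution t s (fun k => j (aa1 k)) := by
      refine ⟨_, ii (A (Nat.pair n c)) (e (Nat.unpair (Nat.pair n c)).2),
        ι (Nat.pair n c + 1), hι _, hcomp', ?_⟩
      generalize ii (A (Nat.pair n c)) (e (Nat.unpair (Nat.pair n c)).2) = j at hs
      have hs2 : ∀ S : HEC.Sys, S = ⟨l, m, κ, t, s⟩ →
          (∀ a : Fin S.1 → (A (Nat.pair n c)).carrier,
            HEC.FinSolv (A (Nat.pair n c)) S.2.2.2.1 S.2.2.2.2 a →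
            HasSolution S.2.2.2.1 S.2.2.2.2 (fun k => j (a k))) →
          HasSolution t s (fun k => j (aa1 k)) := by
        rintro S rfl h
        exact h aa1 hfin
      exact hs2 _ hcode hs
    obtain ⟨B, j, ιB, hιB, hj, hB⟩ := hιn
    have := HEC.hasSolution_map ιB hιB t s _ hB
    simpa only [hj, ha'] using this
end
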